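/- There exists ε₀ > 0 such that for every 0 < ε ≤ ε₀ there exists η₀ > 0 such that for every 0 < η ≤ η₀ there is a homeomorphism h from the Milnor tube N(ε,η) = {x ∈ B̄(0,ε) : ‖f(x)‖ = η} onto {x ∈ S(0,ε) : ‖f(x)‖ ≥ η} satisfying f(h(x))/‖f(h(x))‖ = f(x)/‖f(x)‖ for all x ∈ N(ε,η); that is, the Milnor–Lê fibration on the tube and the Milnor fibration f/‖f‖ on the sphere are equivalent. -/

import Mathlib

/-!
The tube is pushed to the sphere along a vector field `v`, defined near the origin off `f = 0`,
which satisfies `df(v) = f` and `Re ⟪z, v⟫ > 0` (`exists_field`). Along its trajectories the argument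
of `f` is constant, `‖f‖` grows like `exp t`, and the distance to the origin strictly increases; so
every point of the tube reaches the sphere of radius `ε` exactly once, and conversely a point `y` of
the sphere with `‖f y‖ ≥ η` comes from the tube, after flowing backwards for the time
`log (‖f y‖ / η)`. This gives a continuous bijection from a compact part of the sphere onto the tube
(`tube_homeo`), whose inverse is the required homeomorphism. The argument works for every `η > 0`.

Such a field exists as soon as the gradient of `log f` and the position vector `z` do not point in
opposite directions: where `grad (log f) = λ z`, the number `λ` must have positive real part. This is
Milnor's lemma (`milnor_lemma`). If it failed arbitrarily close to the origin, the curve selection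
lemma would give an analytic curve `p` in the bad set, and comparing the leading terms of `p` and
`f ∘ p` gives a contradiction (`curve_re_pos`).

The curve selection lemma (`curve_selection`) is derived from local monomialization along an
ultrafilter: given a nonzero germ `F` of a real analytic function and an ultrafilter converging to
the origin, there is an analytic map `φ`, through which the ultrafilter lifts to another one
converging to the origin, such that `F ∘ φ` is a monomial times a unit (`monomializable_option`).
Working with an ultrafilter means that only one chart of each blow-up has to be followed. The proof is
by induction on the dimension and on the order of `F` in a distinguished variable `t`: a Tschirnhaus
transformation removes the coefficient of `t ^ (d - 1)`, the remaining coefficients are made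
monomial by the induction on the dimension, toric charts make them comparable (`toric`), and a
blow-up lowers the order (`good_of_bounded`) or makes `t ^ d` dominant (`good_of_unbounded`).

Analyticity of the holomorphic function `f` of several variables is Osgood's lemma (`osgood`).
-/

set_option linter.unusedSectionVars false
set_option linter.unusedVariables false

open Set Filter Topology

/-! ### Osgood's lemma -/

section Osgood
open MeasureTheory

/-- The iterated Cauchy integral formula on a polydisc (a ball for the sup norm). -/
theorem torus_cauchy (n : ℕ) : ∀ (c w : Fin n → ℂ) (R : ℝ) (f : (Fin n → ℂ) → ℂ), 0 < R →
    (∀ z ∈ Metric.closedBall c R, DifferentiableAt ℂ f z) → w ∈ Metric.ball c R →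
    torusIntegral (fun z => (∏ i, (z i - w i)⁻¹) * f z) c (fun _ => R)
      = (2 * Real.pi * Complex.I) ^ n * f w := by
  induction n with
  | zero =>
    intro c w R f _ _ _
    have : c = w := Subsingleton.elim _ _
    simp [this]
  | succ n ih =>
    intro c w R f hR hf hw
    have hw' : ∀ i, ‖w i - c i‖ < R := by
      intro i
      have := (dist_pi_lt_iff hR).1 hw i
      rwa [dist_eq_norm] at this
    have hne : ∀ (θ : Fin (n+1) → ℝ) i, torusMap c (fun _ => R) θ i - w i ≠ 0 := by
      intro θ i h
      have h1 := hw' i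
      rw [← sub_eq_zero.1 h] at h1
      simp [torusMap, Complex.norm_exp, abs_of_pos hR] at h1
    have hmem : ∀ (θ : Fin (n+1) → ℝ), torusMap c (fun _ => R) θ ∈ Metric.closedBall c R := by
      intro θ
      refine (dist_pi_le_iff hR.le).2 fun i => ?_
      simp [torusMap, Complex.norm_exp, dist_eq_norm, abs_of_pos hR]
    have htc : Continuous (torusMap c (fun _ => R)) := by
      unfold torusMap; fun_prop
    have hTI : TorusIntegrable (fun z => (∏ i, (z i - w i)⁻¹) * f z) c (fun _ => R) := by
      apply Continuous.integrableOn_Icc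
      refine Continuous.mul (continuous_finsetProd _ fun i _ => ?_) ?_
      · exact Continuous.inv₀ (((continuous_apply i).comp htc).sub continuous_const)
          (fun θ => hne θ i)
      · exact continuous_iff_continuousAt.2 fun θ =>
          ((hf _ (hmem θ)).continuousAt).comp htc.continuousAt
    rw [torusIntegral_succ hTI]
    have hcons : ∀ x ∈ Metric.closedBall (c 0) R, ∀ y ∈ Metric.closedBall (c ∘ Fin.succ) R,
        (Fin.cons x y : Fin (n+1) → ℂ) ∈ Metric.closedBall c R := by
      intro x hx y hy
      refine (dist_pi_le_iff hR.le).2 fun i => ?_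
      refine Fin.cases ?_ (fun j => ?_) i
      · simpa using hx
      · simpa using (dist_pi_le_iff hR.le).1 hy j
    have hwt : (fun i => w (Fin.succ i)) ∈ Metric.ball (c ∘ Fin.succ) R := by
      refine (dist_pi_lt_iff hR).2 fun i => ?_
      simpa using (dist_pi_lt_iff hR).1 hw i.succ
    have hinner : ∀ x ∈ Metric.sphere (c 0) R,
        torusIntegral (fun y : Fin n → ℂ => (∏ i, ((Fin.cons x y : Fin (n+1) → ℂ) i - w i)⁻¹)
          * f (Fin.cons x y)) (c ∘ Fin.succ) (fun _ => R)
        = (2 * Real.pi * Complex.I) ^ n *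
          ((x - w 0)⁻¹ • f (Fin.cons x (fun i => w (Fin.succ i)))) := by
      intro x hx
      have h := ih (c ∘ Fin.succ) (fun i => w (Fin.succ i)) R
        (fun y => (x - w 0)⁻¹ * f (Fin.cons x y)) hR ?_ hwt
      · simp only [smul_eq_mul]
        rw [← h]
        congr 1
        funext y
        rw [Fin.prod_univ_succ]
        simp only [Fin.cons_zero, Fin.cons_succ]
        ring
      · intro y hy
        have h1 := hf _ (hcons x (Metric.sphere_subset_closedBall hx) y hy)
        have h2 : DifferentiableAt ℂ (fun y : Fin n → ℂ => (Fin.cons x y : Fin (n+1) → ℂ)) y := by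
          refine differentiableAt_pi.2 fun i => ?_
          refine Fin.cases ?_ (fun j => ?_) i
          · simp
          · simp only [Fin.cons_succ]; fun_prop
        exact (h1.comp y h2).const_mul _
    have hcongr := circleIntegral.integral_congr (c := c 0) (R := R) hR.le hinner
    have hR' : ((fun _ => R) ∘ Fin.succ : Fin n → ℝ) = fun _ => R := rfl
    rw [hR']
    refine hcongr.trans ?_
    have hd : DifferentiableOn ℂ (fun x => f (Fin.cons x (fun i => w (Fin.succ i))))
        (Metric.closedBall (c 0) R) := by
      intro x hx
      have h1 := hf _ (hcons x hx _ (Metric.ball_subset_closedBall hwt))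
      have h2 : DifferentiableAt ℂ
          (fun x : ℂ => (Fin.cons x (fun i => w (Fin.succ i)) : Fin (n+1) → ℂ)) x := by
        refine differentiableAt_pi.2 fun i => ?_
        refine Fin.cases ?_ (fun j => ?_) i
        · simp
        · simp
      exact (h1.comp x h2).differentiableWithinAt
    have hw0 : w 0 ∈ Metric.ball (c 0) R := by simpa using (dist_pi_lt_iff hR).1 hw 0
    have h3 := hd.circleIntegral_sub_inv_smul hw0
    rw [circleIntegral.integral_const_mul, h3]
    have : (Fin.cons (w 0) (fun i => w (Fin.succ i)) : Fin (n+1) → ℂ) = w := by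
      funext i; refine Fin.cases ?_ (fun j => ?_) i <;> simp
    rw [this, smul_eq_mul]; ring

/-- Osgood's lemma: a complex differentiable function of several variables is analytic. The Cauchy
kernel is an analytic function of the point with values in the Banach algebra of continuous
functions on the torus, and the Cauchy integral is a continuous linear functional of the kernel. -/
theorem osgood_pi {n : ℕ} {U : Set (Fin n → ℂ)} (hU : IsOpen U) {f : (Fin n → ℂ) → ℂ}
    (hf : DifferentiableOn ℂ f U) {c : Fin n → ℂ} (hc : c ∈ U) : AnalyticAt ℂ f c := by
  obtain ⟨R, hR, hRU⟩ := Metric.nhds_basis_closedBall.mem_iff.1 (hU.mem_nhds hc)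
  have hf' : ∀ z ∈ Metric.closedBall c R, DifferentiableAt ℂ f z :=
    fun z hz => hf.differentiableAt (hU.mem_nhds (hRU hz))
  let K : Set (Fin n → ℝ) := Icc (0 : Fin n → ℝ) fun _ => 2 * Real.pi
  have : CompactSpace K := isCompact_iff_compactSpace.1 isCompact_Icc
  have hmem : ∀ (θ : Fin n → ℝ), torusMap c (fun _ => R) θ ∈ Metric.closedBall c R := by
    intro θ
    refine (dist_pi_le_iff hR.le).2 fun i => ?_
    simp [torusMap, Complex.norm_exp, dist_eq_norm, abs_of_pos hR]
  have htc : Continuous (torusMap c (fun _ => R)) := by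
    unfold torusMap; fun_prop
  have hfc : Continuous fun θ => f (torusMap c (fun _ => R) θ) :=
    continuous_iff_continuousAt.2 fun θ => ((hf' _ (hmem θ)).continuousAt).comp htc.continuousAt
  let g : C(K, ℂ) := ⟨fun θ => (∏ i, R * Complex.exp (θ.1 i * Complex.I) * Complex.I : ℂ)
      * f (torusMap c (fun _ => R) θ.1), by
    refine Continuous.mul (continuous_finsetProd _ fun i _ => ?_)
      (hfc.comp continuous_subtype_val)
    have h1 : Continuous fun θ : K => ((θ.1 i : ℝ) : ℂ) :=
      Complex.continuous_ofReal.comp ((continuous_apply i).comp continuous_subtype_val)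
    exact (continuous_const.mul (Complex.continuous_exp.comp
      (h1.mul continuous_const))).mul continuous_const⟩
  let coordF : Fin n → C(K, ℂ) := fun i => ⟨fun θ => torusMap c (fun _ => R) θ.1 i,
    (continuous_apply i).comp (htc.comp continuous_subtype_val)⟩
  let ker : (Fin n → ℂ) → C(K, ℂ) :=
    ∏ i, fun w => Ring.inverse (coordF i - algebraMap ℂ C(K, ℂ) (w i))
  have hne : ∀ w ∈ Metric.ball c R, ∀ (θ : Fin n → ℝ) i,
      torusMap c (fun _ => R) θ i - w i ≠ 0 := by
    intro w hw θ i h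
    have h1 := (dist_pi_lt_iff hR).1 hw i
    rw [dist_eq_norm, ← sub_eq_zero.1 h] at h1
    simp [torusMap, Complex.norm_exp, abs_of_pos hR] at h1
  have hunit : ∀ w ∈ Metric.ball c R, ∀ i, IsUnit (coordF i - algebraMap ℂ C(K, ℂ) (w i)) := by
    intro w hw i
    rw [ContinuousMap.isUnit_iff_forall_ne_zero]
    intro θ
    exact hne w hw θ.1 i
  have hker : AnalyticAt ℂ ker c := by
    refine Finset.analyticAt_prod _ fun i _ => ?_
    have h1 : AnalyticAt ℂ (fun w : Fin n → ℂ => coordF i - algebraMap ℂ C(K, ℂ) (w i)) c := by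
      refine analyticAt_const.sub ?_
      exact (((Algebra.linearMap ℂ C(K, ℂ)).toContinuousLinearMap).comp
        (ContinuousLinearMap.proj (R := ℂ) (φ := fun _ : Fin n => ℂ) i)).analyticAt c
    obtain ⟨u, hu⟩ := hunit c (Metric.mem_ball_self hR) i
    have h2 := analyticAt_inverse (𝕜 := ℂ) u
    rw [hu] at h2
    exact h2.fun_comp_of_eq h1 rfl
  let ℓ : C(K, ℂ) →L[ℂ] ℂ := LinearMap.mkContinuous
    { toFun := fun k => ∫ θ : K, g θ * k θ ∂(Measure.comap Subtype.val volume)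
      map_add' := by
        intro a b
        have : IsFiniteMeasure (Measure.comap (Subtype.val : K → (Fin n → ℝ)) volume) := by
          refine ⟨?_⟩
          rw [MeasurableEmbedding.comap_apply (MeasurableEmbedding.subtype_coe measurableSet_Icc)]
          rw [image_univ, Subtype.range_coe]
          exact (measure_Icc_lt_top (a := (0 : Fin n → ℝ)) (b := fun _ => 2 * Real.pi))
        have hi : ∀ k : C(K, ℂ), Integrable (fun θ : K => g θ * k θ)
            (Measure.comap Subtype.val volume) := fun k =>
          Integrable.of_bound (g * k).continuous.aestronglyMeasurable ‖g * k‖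
            (Filter.Eventually.of_forall fun θ => (g * k).norm_coe_le_norm θ)
        rw [← integral_add (hi a) (hi b)]
        simp [mul_add]
      map_smul' := by
        intro a b
        rw [RingHom.id_apply, smul_eq_mul, ← integral_const_mul]
        congr 1; funext θ; simp; ring }
    (‖g‖ * (Measure.comap (Subtype.val : K → (Fin n → ℝ)) volume).real univ) (by
      intro k
      have : IsFiniteMeasure (Measure.comap (Subtype.val : K → (Fin n → ℝ)) volume) := by
        refine ⟨?_⟩
        rw [MeasurableEmbedding.comap_apply (MeasurableEmbedding.subtype_coe measurableSet_Icc)]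
        rw [image_univ, Subtype.range_coe]
        exact (measure_Icc_lt_top (a := (0 : Fin n → ℝ)) (b := fun _ => 2 * Real.pi))
      have := norm_integral_le_of_norm_le_const
        (μ := Measure.comap (Subtype.val : K → (Fin n → ℝ)) volume)
        (f := fun θ : K => g θ * k θ) (C := ‖g‖ * ‖k‖)
        (Filter.Eventually.of_forall fun θ => by
          rw [norm_mul]
          exact mul_le_mul (g.norm_coe_le_norm θ) (k.norm_coe_le_norm θ) (norm_nonneg _)
            (norm_nonneg _))
      calc _ ≤ _ := this
        _ = _ := by ring)
  have key : ∀ w ∈ Metric.ball c R, ℓ (ker w) = (2 * Real.pi * Complex.I) ^ n * f w := by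
    intro w hw
    rw [← torus_cauchy n c w R f hR hf' hw]
    have hk : ∀ θ : K, ker w θ = ∏ i, (torusMap c (fun _ => R) θ.1 i - w i)⁻¹ := by
      intro θ
      have : ker w = ∏ i, Ring.inverse (coordF i - algebraMap ℂ C(K, ℂ) (w i)) := by
        simp [ker, Finset.prod_apply]
      rw [this, ContinuousMap.prod_apply]
      refine Finset.prod_congr rfl fun i _ => ?_
      have h1 := Ring.mul_inverse_cancel _ (hunit w hw i)
      have h2 := congrArg (fun k : C(K, ℂ) => k θ) h1
      simp only [ContinuousMap.mul_apply, ContinuousMap.one_apply] at h2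
      exact eq_inv_of_mul_eq_one_right h2
    have h3 : ℓ (ker w) = ∫ θ : K, g θ * ker w θ ∂(Measure.comap Subtype.val volume) := rfl
    rw [h3]
    unfold torusIntegral
    rw [← integral_subtype_comap measurableSet_Icc]
    congr 1
    funext θ
    rw [hk θ]
    simp only [g, ContinuousMap.coe_mk, smul_eq_mul]
    ring
  have h0 : ((2 * Real.pi * Complex.I) ^ n : ℂ) ≠ 0 :=
    pow_ne_zero _ (by simp [Real.pi_ne_zero])
  have h4 : AnalyticAt ℂ (fun w => ((2 * Real.pi * Complex.I) ^ n : ℂ)⁻¹ * ℓ (ker w)) c :=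
    analyticAt_const.mul ((ℓ.analyticAt _).fun_comp_of_eq hker rfl)
  refine h4.congr ?_
  filter_upwards [Metric.ball_mem_nhds c hR] with w hw
  rw [key w hw, inv_mul_cancel_left₀ h0]

theorem osgood {n : ℕ} {U : Set (EuclideanSpace ℂ (Fin n))} (hU : IsOpen U)
    {f : EuclideanSpace ℂ (Fin n) → ℂ} (hf : DifferentiableOn ℂ f U) :
    AnalyticOnNhd ℂ f U := by
  intro c hc
  let e := EuclideanSpace.equiv (Fin n) ℂ
  have h1 : AnalyticAt ℂ (f ∘ e.symm) (e c) := by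
    refine osgood_pi (U := e.symm ⁻¹' U) (hU.preimage e.symm.continuous) ?_ (by simpa using hc)
    exact hf.comp e.symm.differentiable.differentiableOn (fun x hx => hx)
  have h2 := h1.fun_comp_of_eq
    ((e : EuclideanSpace ℂ (Fin n) →L[ℂ] (Fin n → ℂ)).analyticAt c) rfl
  refine h2.congr (Filter.Eventually.of_forall fun x => ?_)
  simp

end Osgood

/-! ### Division of analytic functions by a linear form -/

section Division
variable {E : Type*} [NormedAddCommGroup E] [NormedSpace ℝ E]

/-- Telescoping a multilinear form on the diagonal along the projection `P`. -/
theorem multilinear_telescope {n : ℕ} (p : ContinuousMultilinearMap ℝ (fun _ : Fin (n + 1) => E) ℝ)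
    (P : E →L[ℝ] E) (ℓ : E →L[ℝ] ℝ) (e : E) (hP : ∀ x, x - P x = ℓ x • e) (x : E) :
    p (fun _ => x) - p (fun _ => P x) = ℓ x * ∑ j : Fin (n + 1),
      p (j.insertNth e fun i => if i.castSucc < j then x else P x) := by
  let F : ℕ → ℝ := fun k => p (fun i => if i.val < k then x else P x)
  have h0 : F 0 = p (fun _ => P x) := by simp [F]
  have h1 : F (n + 1) = p (fun _ => x) := by
    simp only [F]; congr 1; funext i; simp [i.2]
  rw [← h0, ← h1, ← Finset.sum_range_sub, Finset.sum_range, Finset.mul_sum]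
  refine Finset.sum_congr rfl fun j _ => ?_
  let b : Fin (n + 1) → E := fun i => if i.val < j.val then x else P x
  have e1 : (fun i : Fin (n + 1) => if i.val < j.val + 1 then x else P x)
      = Function.update b j x := by
    funext i
    rcases eq_or_ne i j with rfl | hij
    · simp
    · have : i.val ≠ j.val := fun h => hij (Fin.ext h)
      simp only [Function.update_of_ne hij, b]
      congr 1
      simp only [eq_iff_iff]; omega
  have e2 : (fun i : Fin (n + 1) => if i.val < j.val then x else P x)
      = Function.update b j (P x) := by
    funext i
    rcases eq_or_ne i j with rfl | hij
    · simp
    · simp only [Function.update_of_ne hij, b]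
  have e3 : (j.insertNth e fun i => if i.castSucc < j then x else P x : Fin (n + 1) → E)
      = Function.update b j e := by
    funext i
    refine Fin.succAboveCases j ?_ (fun k => ?_) i
    · simp
    · rw [Fin.insertNth_apply_succAbove, Function.update_of_ne (Fin.succAbove_ne j k)]
      simp only [b]
      congr 1
      simp only [eq_iff_iff, Fin.succAbove, Fin.lt_def]
      split_ifs with hk
      · simp
      · simp only [Fin.val_castSucc, Fin.val_succ] at *
        omega
  simp only [F]
  rw [e1, e2, e3, ← ContinuousMultilinearMap.map_update_sub, hP,
    ContinuousMultilinearMap.map_update_smul, smul_eq_mul]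

/-- Hadamard's lemma for analytic functions: dividing `f - f ∘ P` by the linear form `ℓ` cutting out
the image of the projection `P`. -/
theorem analytic_division {f : E → ℝ} (hf : AnalyticAt ℝ f 0)
    (P : E →L[ℝ] E) (ℓ : E →L[ℝ] ℝ) (e : E) (hP : ∀ x, x - P x = ℓ x • e) :
    ∃ h : E → ℝ, AnalyticAt ℝ h 0 ∧ ∀ᶠ x in 𝓝 0, f x = f (P x) + ℓ x * h x := by
  obtain ⟨p, r, hp⟩ := hf
  let q : FormalMultilinearSeries ℝ E ℝ := fun n => ∑ j : Fin (n + 1),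
    (ContinuousMultilinearMap.curryMid j (p (n + 1)) e).compContinuousLinearMap
      (fun i => if i.castSucc < j then ContinuousLinearMap.id ℝ E else P)
  have hq : ∀ n x, q n (fun _ => x) = ∑ j : Fin (n + 1),
      p (n + 1) (j.insertNth e fun i => if i.castSucc < j then x else P x) := by
    intro n x
    simp only [q, ContinuousMultilinearMap.sum_apply]
    refine Finset.sum_congr rfl fun j _ => ?_
    rw [ContinuousMultilinearMap.compContinuousLinearMap_apply,
      ContinuousMultilinearMap.curryMid_apply]
    congr 2
    funext i
    split_ifs <;> simp
  set M : ℝ := max 1 ‖P‖ with hM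
  have hM1 : 1 ≤ M := le_max_left _ _
  have hqn : ∀ n, ‖q n‖ ≤ (n + 1) * (‖p (n + 1)‖ * ‖e‖ * M ^ n) := by
    intro n
    refine (norm_sum_le _ _).trans ?_
    have : ∀ j ∈ (Finset.univ : Finset (Fin (n + 1))),
        ‖(ContinuousMultilinearMap.curryMid j (p (n + 1)) e).compContinuousLinearMap
          (fun i => if i.castSucc < j then ContinuousLinearMap.id ℝ E else P)‖
        ≤ ‖p (n + 1)‖ * ‖e‖ * M ^ n := by
      intro j _
      refine (ContinuousMultilinearMap.norm_compContinuousLinearMap_le _ _).trans ?_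
      refine mul_le_mul ?_ ?_ (Finset.prod_nonneg fun _ _ => norm_nonneg _) (by positivity)
      · refine (ContinuousLinearMap.le_opNorm _ _).trans ?_
        rw [ContinuousMultilinearMap.norm_curryMid]
      · calc _ ≤ ∏ _i : Fin n, M := by
              refine Finset.prod_le_prod (fun _ _ => norm_nonneg _) fun i _ => ?_
              split_ifs
              · exact ContinuousLinearMap.norm_id_le.trans hM1
              · exact le_max_right _ _
          _ = M ^ n := by simp
    refine (Finset.sum_le_card_nsmul _ _ _ this).trans ?_
    simp
  obtain ⟨r', hr'0, hr'⟩ : ∃ r' : NNReal, 0 < r' ∧ (r' : ENNReal) < p.radius := by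
    have := hp.r_pos.trans_le hp.r_le
    obtain ⟨r', h1, h2⟩ := ENNReal.lt_iff_exists_nnreal_btwn.1 this
    exact ⟨r', by simpa using h1, h2⟩
  obtain ⟨C, hC0, hC⟩ := p.norm_le_div_pow_of_pos_of_lt_radius hr'0 hr'
  have hr'R : (0 : ℝ) < r' := by exact_mod_cast hr'0
  let ρ : NNReal := ⟨r' / (2 * M), by positivity⟩
  have hρ : 0 < q.radius := by
    have : (ρ : ENNReal) ≤ q.radius := by
      refine q.le_radius_of_bound (C / r' * ‖e‖) fun n => ?_
      have h2 : ((n : ℝ) + 1) ≤ 2 ^ n := by exact_mod_cast Nat.lt_two_pow_self (n := n)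
      calc ‖q n‖ * (ρ : ℝ) ^ n
          ≤ ((n + 1) * (C / r' ^ (n + 1) * ‖e‖ * M ^ n)) * (ρ : ℝ) ^ n := by
            refine mul_le_mul_of_nonneg_right ((hqn n).trans ?_) (by positivity)
            have := hC (n + 1)
            gcongr
        _ = ((n + 1) / 2 ^ n) * (C / r' * ‖e‖) := by
            change _ * (r' / (2 * M) : ℝ) ^ n = _
            rw [div_pow, mul_pow, pow_succ]
            field_simp
        _ ≤ 1 * (C / r' * ‖e‖) := by
            refine mul_le_mul_of_nonneg_right ?_ (by positivity)
            rw [div_le_one (by positivity)]; exact h2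
        _ = _ := one_mul _
    refine lt_of_lt_of_le ?_ this
    have : (0 : NNReal) < ρ := by
      change (0 : ℝ) < r' / (2 * M)
      positivity
    exact_mod_cast this
  have hqs := q.hasFPowerSeriesOnBall hρ
  refine ⟨q.sum, ⟨q, _, hqs⟩, ?_⟩
  have m1 : ∀ᶠ x in 𝓝 (0 : E), x ∈ Metric.eball (0 : E) r := Metric.eball_mem_nhds _ hp.r_pos
  have m2 : ∀ᶠ x in 𝓝 (0 : E), P x ∈ Metric.eball (0 : E) r := by
    have : Tendsto P (𝓝 0) (𝓝 0) := by simpa using P.continuous.tendsto 0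
    exact this (Metric.eball_mem_nhds _ hp.r_pos)
  have m3 : ∀ᶠ x in 𝓝 (0 : E), x ∈ Metric.eball (0 : E) q.radius := Metric.eball_mem_nhds _ hρ
  filter_upwards [m1, m2, m3] with x h1 h2 h3
  have s1 := hp.hasSum h1
  have s2 := hp.hasSum h2
  have s3 := (hqs.hasSum h3).mul_left (ℓ x)
  simp only [zero_add] at s1 s2 s3
  have s4 := s1.sub s2
  rw [← hasSum_nat_add_iff' 1] at s4
  have s5 := s4.unique (s3.congr_fun ?_)
  · simp only [Finset.range_one, Finset.sum_singleton] at s5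
    have : p 0 (fun _ => x) = p 0 (fun _ => P x) := congrArg _ (Subsingleton.elim _ _)
    linarith
  · intro n
    rw [hq, multilinear_telescope _ P ℓ e hP]
end Division

/-! ### Monomials times units -/

section Germs
variable {E : Type*} [NormedAddCommGroup E] [NormedSpace ℝ E]

/-- The ring of germs of real analytic functions is an integral domain. -/
theorem germ_mul_eq_zero {f g : E → ℝ} (hf : AnalyticAt ℝ f 0) (hg : AnalyticAt ℝ g 0)
    (h : ∀ᶠ x in 𝓝 0, f x * g x = 0) : (∀ᶠ x in 𝓝 0, f x = 0) ∨ ∀ᶠ x in 𝓝 0, g x = 0 := by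
  obtain ⟨r, hr, hball⟩ := Metric.eventually_nhds_iff_ball.1
    ((hf.eventually_analyticAt.and hg.eventually_analyticAt).and h)
  by_cases hz : ∀ x ∈ Metric.ball (0 : E) r, f x = 0
  · exact Or.inl (Filter.mem_of_superset (Metric.ball_mem_nhds _ hr) hz)
  · right
    push Not at hz
    obtain ⟨x, hx, hfx⟩ := hz
    have h1 : g =ᶠ[𝓝 x] 0 := by
      filter_upwards [((hball x hx).1.1.continuousAt).eventually_ne hfx,
        Metric.isOpen_ball.mem_nhds hx] with y hy hy'
      exact (mul_eq_zero.1 (hball y hy').2).resolve_left hy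
    have h2 : AnalyticOnNhd ℝ g (Metric.ball 0 r) := fun y hy => (hball y hy).1.2
    have h3 := h2.eqOn_zero_of_preconnected_of_eventuallyEq_zero
      (convex_ball _ _).isPreconnected hx h1
    exact Filter.mem_of_superset (Metric.ball_mem_nhds _ hr) h3

end Germs

section Monomials
variable {ι κ : Type*} [Fintype ι] [Fintype κ]

/-- Near the origin, `g` is the monomial with exponent vector `α` times an analytic unit. -/
def HasExp (g : (ι → ℝ) → ℝ) (α : ι → ℕ) : Prop :=
  ∃ v : (ι → ℝ) → ℝ, AnalyticAt ℝ v 0 ∧ v 0 ≠ 0 ∧ g =ᶠ[𝓝 0] fun y => (∏ i, y i ^ α i) * v y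

/-- Near the origin, `g` is some monomial times an analytic unit. -/
def IsMon (g : (ι → ℝ) → ℝ) : Prop := ∃ α, HasExp g α

/-- Divisibility of germs of functions at the origin, with analytic quotient. -/
def AnDvd (g h : (ι → ℝ) → ℝ) : Prop :=
  ∃ q : (ι → ℝ) → ℝ, AnalyticAt ℝ q 0 ∧ ∀ᶠ y in 𝓝 0, h y = q y * g y

theorem analyticAt_coord (i : ι) (x : ι → ℝ) : AnalyticAt ℝ (fun y : ι → ℝ => y i) x :=
  (ContinuousLinearMap.proj (R := ℝ) (φ := fun _ : ι => ℝ) i).analyticAt x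

theorem analyticAt_monomial (α : ι → ℕ) (x : ι → ℝ) :
    AnalyticAt ℝ (fun y : ι → ℝ => ∏ i, y i ^ α i) x :=
  Finset.univ.analyticAt_fun_prod fun i _ => (analyticAt_coord i x).fun_pow _

theorem HasExp.analyticAt {g : (ι → ℝ) → ℝ} {α} (h : HasExp g α) : AnalyticAt ℝ g 0 := by
  obtain ⟨v, hv, -, e⟩ := h
  exact ((analyticAt_monomial α 0).fun_mul hv).congr e.symm

theorem HasExp.congr {g h : (ι → ℝ) → ℝ} {α} (hg : HasExp g α) (e : ∀ᶠ y in 𝓝 0, h y = g y) :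
    HasExp h α := by
  obtain ⟨v, hv, hv0, e'⟩ := hg
  exact ⟨v, hv, hv0, EventuallyEq.trans e e'⟩

theorem HasExp.mul {g h : (ι → ℝ) → ℝ} {α β} (hg : HasExp g α) (hh : HasExp h β) :
    HasExp (fun y => g y * h y) (α + β) := by
  obtain ⟨v, hv, hv0, e⟩ := hg
  obtain ⟨w, hw, hw0, e'⟩ := hh
  refine ⟨fun y => v y * w y, hv.fun_mul hw, mul_ne_zero hv0 hw0, ?_⟩
  filter_upwards [e, e'] with y h1 h2
  rw [h1, h2]
  simp only [Pi.add_apply, pow_add, Finset.prod_mul_distrib]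
  ring

theorem hasExp_unit {v : (ι → ℝ) → ℝ} (hv : AnalyticAt ℝ v 0) (h0 : v 0 ≠ 0) :
    HasExp v 0 := ⟨v, hv, h0, by simp⟩

theorem hasExp_const {c : ℝ} (hc : c ≠ 0) : HasExp (fun _ : ι → ℝ => c) 0 :=
  hasExp_unit analyticAt_const hc

theorem hasExp_coord [DecidableEq ι] (i : ι) :
    HasExp (fun y : ι → ℝ => y i) (Pi.single i 1) := by
  refine ⟨fun _ => 1, analyticAt_const, one_ne_zero, Eventually.of_forall fun y => ?_⟩
  simp only [mul_one]
  rw [Finset.prod_eq_single i (fun j _ hj => by simp [Pi.single_eq_of_ne hj]) (by simp)]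
  simp

theorem HasExp.pow {g : (ι → ℝ) → ℝ} {α} (hg : HasExp g α) (k : ℕ) :
    HasExp (fun y => g y ^ k) (k • α) := by
  induction k with
  | zero => simpa using hasExp_const (ι := ι) one_ne_zero
  | succ k ih =>
    rw [succ_nsmul]
    simp only [pow_succ]
    exact ih.mul hg

theorem HasExp.prod {g : κ → (ι → ℝ) → ℝ} {α : κ → ι → ℕ} (s : Finset κ)
    (hg : ∀ k ∈ s, HasExp (g k) (α k)) :
    HasExp (fun y => ∏ k ∈ s, g k y) (∑ k ∈ s, α k) := by
  classical
  induction s using Finset.induction_on with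
  | empty => simpa using hasExp_const (ι := ι) one_ne_zero
  | insert k s hk ih =>
    rw [Finset.sum_insert hk]
    simp only [Finset.prod_insert hk]
    exact (hg k (Finset.mem_insert_self _ _)).mul (ih fun j hj => hg j (Finset.mem_insert_of_mem hj))

theorem tendsto_zero_of_analytic {φ : (κ → ℝ) → ι → ℝ} (hφ : AnalyticAt ℝ φ 0) (h0 : φ 0 = 0) :
    Tendsto φ (𝓝 0) (𝓝 0) := by
  simpa [ContinuousAt, h0] using hφ.continuousAt

theorem HasExp.comp {g : (ι → ℝ) → ℝ} {α : ι → ℕ} (hg : HasExp g α) {φ : (κ → ℝ) → ι → ℝ}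
    (hφ : AnalyticAt ℝ φ 0) (h0 : φ 0 = 0) {M : ι → κ → ℕ}
    (hM : ∀ i, HasExp (fun y => φ y i) (M i)) :
    HasExp (fun y => g (φ y)) (∑ i, α i • M i) := by
  obtain ⟨v, hv, hv0, e⟩ := hg
  have h1 := HasExp.prod Finset.univ fun i _ => (hM i).pow (α i)
  have h2 : HasExp (fun y => v (φ y)) 0 :=
    hasExp_unit (AnalyticAt.fun_comp_of_eq hv hφ h0) (by simpa [h0] using hv0)
  have h3 := h1.mul h2
  rw [add_zero] at h3
  exact h3.congr ((tendsto_zero_of_analytic hφ h0).eventually e)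

theorem IsMon.analyticAt {g : (ι → ℝ) → ℝ} (h : IsMon g) : AnalyticAt ℝ g 0 :=
  h.elim fun _ h => h.analyticAt

theorem IsMon.congr {g h : (ι → ℝ) → ℝ} (hg : IsMon g) (e : ∀ᶠ y in 𝓝 0, h y = g y) :
    IsMon h := hg.elim fun _ h => ⟨_, h.congr e⟩

theorem IsMon.mul {g h : (ι → ℝ) → ℝ} (hg : IsMon g) (hh : IsMon h) :
    IsMon (fun y => g y * h y) :=
  hg.elim fun _ h => hh.elim fun _ h' => ⟨_, h.mul h'⟩

theorem IsMon.pow {g : (ι → ℝ) → ℝ} (hg : IsMon g) (k : ℕ) : IsMon (fun y => g y ^ k) :=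
  hg.elim fun _ h => ⟨_, h.pow k⟩

theorem IsMon.comp {g : (ι → ℝ) → ℝ} (hg : IsMon g) {φ : (κ → ℝ) → ι → ℝ}
    (hφ : AnalyticAt ℝ φ 0) (h0 : φ 0 = 0) (hM : ∀ i, IsMon (fun y => φ y i)) :
    IsMon (fun y => g (φ y)) := by
  choose M hM using hM
  exact hg.elim fun _ h => ⟨_, h.comp hφ h0 hM⟩

theorem isMon_coord (i : ι) : IsMon (fun y : ι → ℝ => y i) := by
  classical exact ⟨_, hasExp_coord i⟩

theorem isMon_unit {v : (ι → ℝ) → ℝ} (hv : AnalyticAt ℝ v 0) (h0 : v 0 ≠ 0) : IsMon v :=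
  ⟨0, hasExp_unit hv h0⟩

theorem AnDvd.comp {g h : (ι → ℝ) → ℝ} (hd : AnDvd g h) {φ : (κ → ℝ) → ι → ℝ}
    (hφ : AnalyticAt ℝ φ 0) (h0 : φ 0 = 0) : AnDvd (fun y => g (φ y)) (fun y => h (φ y)) := by
  obtain ⟨q, hq, e⟩ := hd
  exact ⟨fun y => q (φ y), AnalyticAt.fun_comp_of_eq hq hφ h0,
    (tendsto_zero_of_analytic hφ h0).eventually e⟩

theorem AnDvd.trans {g h k : (ι → ℝ) → ℝ} (h1 : AnDvd g h) (h2 : AnDvd h k) : AnDvd g k := by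
  obtain ⟨q, hq, e⟩ := h1
  obtain ⟨r, hr, e'⟩ := h2
  refine ⟨fun y => r y * q y, hr.fun_mul hq, ?_⟩
  filter_upwards [e, e'] with y h1 h2
  rw [h2, h1, mul_assoc]

theorem AnDvd.refl (g : (ι → ℝ) → ℝ) : AnDvd g g :=
  ⟨fun _ => 1, analyticAt_const, by simp⟩

theorem HasExp.anDvd {g h : (ι → ℝ) → ℝ} {α β} (hg : HasExp g α) (hh : HasExp h β) (hle : α ≤ β) :
    AnDvd g h := by
  obtain ⟨v, hv, hv0, e⟩ := hg
  obtain ⟨w, hw, hw0, e'⟩ := hh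
  refine ⟨fun y => (∏ i, y i ^ (β i - α i)) * (w y / v y),
    (analyticAt_monomial _ 0).fun_mul (hw.fun_div hv hv0), ?_⟩
  filter_upwards [e, e', hv.continuousAt.eventually_ne hv0] with y h1 h2 h3
  rw [h1, h2]
  have : ∏ i, y i ^ β i = (∏ i, y i ^ (β i - α i)) * ∏ i, y i ^ α i := by
    rw [← Finset.prod_mul_distrib]
    exact Finset.prod_congr rfl fun i _ => by rw [← pow_add, Nat.sub_add_cancel (hle i)]
  rw [this]
  field_simp

/-- The projection of `ℝ^ι` onto the coordinate hyperplane `y i = 0`. -/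
noncomputable def hyperProj (i : ι) : (ι → ℝ) →L[ℝ] (ι → ℝ) := by
  classical exact ContinuousLinearMap.id ℝ _ -
    (ContinuousLinearMap.proj (R := ℝ) (φ := fun _ : ι => ℝ) i).smulRight (Pi.single i 1)

theorem hyperProj_same (i : ι) (y : ι → ℝ) : hyperProj i y i = 0 := by
  simp [hyperProj]

theorem hyperProj_ne {i j : ι} (h : j ≠ i) (y : ι → ℝ) : hyperProj i y j = y j := by
  simp [hyperProj, h]

theorem analytic_division_coord {f : (ι → ℝ) → ℝ} (hf : AnalyticAt ℝ f 0) (i : ι) :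
    ∃ h : (ι → ℝ) → ℝ, AnalyticAt ℝ h 0 ∧
      ∀ᶠ x in 𝓝 0, f x = f (hyperProj i x) + x i * h x := by
  classical
  exact analytic_division hf (hyperProj i)
    (ContinuousLinearMap.proj (R := ℝ) (φ := fun _ : ι => ℝ) i) (Pi.single i 1)
    (fun x => by simp only [hyperProj]; simp)

theorem not_eventually_coord_zero (i : ι) : ¬ ∀ᶠ y : ι → ℝ in 𝓝 0, y i = 0 := by
  classical
  intro h
  have h1 : Tendsto (fun t : ℝ => (Pi.single i t : ι → ℝ)) (𝓝[≠] 0) (𝓝 0) := by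
    have : Continuous (fun t : ℝ => (Pi.single i t : ι → ℝ)) := by
      refine continuous_pi fun j => ?_
      by_cases hj : j = i
      · subst hj; simp only [Pi.single_eq_same]; exact continuous_id
      · simpa [hj] using continuous_const
    simpa using (this.tendsto 0).mono_left nhdsWithin_le_nhds
  obtain ⟨t, ht, ht'⟩ := ((h1.eventually h).and self_mem_nhdsWithin).exists
  simp at ht
  exact ht' ht

/-- Coordinates are nonzero germs, hence cancellable. -/
theorem coord_mul_cancel {i : ι} {F G : (ι → ℝ) → ℝ} (hF : AnalyticAt ℝ F 0)
    (hG : AnalyticAt ℝ G 0) (h : ∀ᶠ y in 𝓝 0, y i * F y = y i * G y) :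
    ∀ᶠ y in 𝓝 0, F y = G y := by
  have := germ_mul_eq_zero (analyticAt_coord i 0) (hF.fun_sub hG)
    (by filter_upwards [h] with y hy; rw [mul_sub, hy, sub_self])
  filter_upwards [this.resolve_left (not_eventually_coord_zero i)] with y hy
  exact sub_eq_zero.1 hy

/-- Analytic divisors of a monomial-times-unit are of the same form. -/
theorem isMon_of_mul {g h : (ι → ℝ) → ℝ} (hg : AnalyticAt ℝ g 0) (hh : AnalyticAt ℝ h 0)
    (hm : IsMon (fun y => g y * h y)) : IsMon g := by
  classical
  obtain ⟨α, hα⟩ := hm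
  induction hN' : ∑ i, α i generalizing g h α with
  | zero =>
    obtain ⟨v, hv, hv0, e⟩ := hα
    have := e.self_of_nhds
    have hα : ∀ i, α i = 0 := by simpa using hN'
    simp only [hα, pow_zero, Finset.prod_const_one, one_mul] at this
    exact isMon_unit hg fun h0 => hv0 (by rw [← this, h0, zero_mul])
  | succ N ih =>
    obtain ⟨i, hi⟩ : ∃ i, α i ≠ 0 := by
      by_contra! hc
      simp [hc] at hN'
    obtain ⟨v, hv, hv0, e⟩ := hα
    have hP0 : hyperProj i (0 : ι → ℝ) = 0 := map_zero _
    have hPt : Tendsto (hyperProj i) (𝓝 (0 : ι → ℝ)) (𝓝 0) := by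
      simpa using (hyperProj i).continuous.tendsto 0
    have hgP : AnalyticAt ℝ (fun y => g (hyperProj i y)) 0 :=
      AnalyticAt.fun_comp_of_eq hg ((hyperProj i).analyticAt 0) hP0
    have hhP : AnalyticAt ℝ (fun y => h (hyperProj i y)) 0 :=
      AnalyticAt.fun_comp_of_eq hh ((hyperProj i).analyticAt 0) hP0
    have hz : ∀ᶠ y in 𝓝 0, g (hyperProj i y) * h (hyperProj i y) = 0 := by
      filter_upwards [hPt.eventually e] with y hy
      rw [hy, Finset.prod_eq_zero (Finset.mem_univ i) (by rw [hyperProj_same, zero_pow hi]),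
        zero_mul]
    set α' : ι → ℕ := α - Pi.single i 1 with hα'
    have hsum : α = α' + Pi.single i 1 := by
      funext j
      by_cases hj : j = i
      · subst hj; simp [hα']; omega
      · simp [hα', hj]
    have hN : ∑ i, α' i = N := by
      rw [hsum] at hN'
      simp [Finset.sum_add_distrib] at hN'
      exact hN'
    have hmon : ∀ y : ι → ℝ, ∏ j, y j ^ α j = y i * ∏ j, y j ^ α' j := by
      intro y
      rw [hsum]
      simp only [Pi.add_apply, pow_add, Finset.prod_mul_distrib]
      rw [mul_comm, Finset.prod_eq_single i (fun j _ hj => by simp [Pi.single_eq_of_ne hj])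
        (by simp)]
      simp
    have hR := (analyticAt_monomial α' 0).fun_mul hv
    rcases germ_mul_eq_zero hgP hhP hz with h0 | h0
    · obtain ⟨g1, hg1, e1⟩ := analytic_division_coord hg i
      have e2 : ∀ᶠ y in 𝓝 0, g y = y i * g1 y := by
        filter_upwards [h0, e1] with y a b
        rw [b, a, zero_add]
      have e3 := coord_mul_cancel (i := i) (hg1.fun_mul hh) hR (by
        filter_upwards [e2, e] with y a b
        rw [← mul_assoc, ← a, b, hmon]; ring)
      exact ((isMon_coord i).mul (ih hg1 hh α' ⟨v, hv, hv0, e3⟩ hN)).congr e2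
    · obtain ⟨h1, hh1, e1⟩ := analytic_division_coord hh i
      have e2 : ∀ᶠ y in 𝓝 0, h y = y i * h1 y := by
        filter_upwards [h0, e1] with y a b
        rw [b, a, zero_add]
      have e3 := coord_mul_cancel (i := i) (hg.fun_mul hh1) hR (by
        filter_upwards [e2, e] with y a b
        rw [mul_left_comm, ← a, b, hmon]; ring)
      exact ih hg hh1 α' ⟨v, hv, hv0, e3⟩ hN

end Monomials

/-! ### Charts adapted to an ultrafilter and toric charts -/

section Charts
variable {ι : Type*} [Fintype ι]

/-- An analytic map `φ` fixing the origin, through which the ultrafilter `𝓤` lifts by the (not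
necessarily continuous) section `s` to an ultrafilter `𝓤.map s` converging to the origin. -/
structure Chart (φ s : (ι → ℝ) → ι → ℝ) (𝓤 : Ultrafilter (ι → ℝ)) : Prop where
  analytic : AnalyticAt ℝ φ 0
  map_zero : φ 0 = 0
  tendsto : Tendsto s 𝓤 (𝓝 0)
  eq : ∀ᶠ x in 𝓤, φ (s x) = x

theorem Chart.map_le {φ s : (ι → ℝ) → ι → ℝ} {𝓤 : Ultrafilter (ι → ℝ)} (h : Chart φ s 𝓤) :
    (𝓤.map s : Filter (ι → ℝ)) ≤ 𝓝 0 := h.tendsto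

theorem Chart.id {𝓤 : Ultrafilter (ι → ℝ)} (h : (𝓤 : Filter (ι → ℝ)) ≤ 𝓝 0) :
    Chart (fun y => y) (fun y => y) 𝓤 :=
  ⟨analyticAt_id, rfl, h, by simp⟩

theorem Chart.comp {φ₁ s₁ φ₂ s₂ : (ι → ℝ) → ι → ℝ} {𝓤 : Ultrafilter (ι → ℝ)}
    (h₁ : Chart φ₁ s₁ 𝓤) (h₂ : Chart φ₂ s₂ (𝓤.map s₁)) :
    Chart (fun y => φ₁ (φ₂ y)) (fun y => s₂ (s₁ y)) 𝓤 := by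
  refine ⟨AnalyticAt.fun_comp_of_eq h₁.analytic h₂.analytic h₂.map_zero, ?_, ?_, ?_⟩
  · rw [h₂.map_zero, h₁.map_zero]
  · exact h₂.tendsto
  · have h := h₂.eq
    rw [Ultrafilter.coe_map, eventually_map] at h
    filter_upwards [h, h₁.eq] with x hx hx'
    rw [hx, hx']

theorem exists_sign {X : Type*} (𝓤 : Ultrafilter X) (g : X → ℝ) :
    ∃ σ : ℝ, (σ = 1 ∨ σ = -1) ∧ ∀ᶠ x in 𝓤, g x = σ * |g x| := by
  have : ∀ᶠ x in 𝓤, 0 ≤ g x ∨ g x ≤ 0 := Eventually.of_forall fun x => le_total _ _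
  rcases Ultrafilter.eventually_or.1 this with h | h
  · exact ⟨1, Or.inl rfl, h.mono fun x hx => by rw [abs_of_nonneg hx, one_mul]⟩
  · exact ⟨-1, Or.inr rfl, h.mono fun x hx => by rw [abs_of_nonpos hx]; ring⟩

theorem analyticAt_update [DecidableEq ι] {φ : (ι → ℝ) → ι → ℝ} {g : (ι → ℝ) → ℝ} {x : ι → ℝ}
    (hφ : AnalyticAt ℝ φ x) (hg : AnalyticAt ℝ g x) (i : ι) :
    AnalyticAt ℝ (fun y => Function.update (φ y) i (g y)) x := by
  rw [analyticAt_pi_iff] at hφ ⊢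
  intro j
  by_cases hj : j = i
  · subst hj; simpa using hg
  · simpa [hj] using hφ j

/-- The elementary step of the toric argument: a weighted blow-up in the coordinates `i`, `j`,
read in the chart that contains the ultrafilter. -/
theorem toric_step [DecidableEq ι] {i j : ι} (hij : i ≠ j) {A B : ℕ} (hA : A ≠ 0) (hB : B ≠ 0)
    {𝓤 : Ultrafilter (ι → ℝ)} (h𝓤 : (𝓤 : Filter (ι → ℝ)) ≤ 𝓝 0)
    (hle : ∀ᶠ y : ι → ℝ in 𝓤, |y i| ^ (B⁻¹ : ℝ) ≤ |y j| ^ (A⁻¹ : ℝ)) :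
    ∃ (φ s : (ι → ℝ) → ι → ℝ) (δ : ℕ), Chart φ s 𝓤 ∧
      HasExp (fun y => φ y j) (A • Pi.single j 1) ∧
      HasExp (fun y => φ y i) (B • (Pi.single j 1 + δ • Pi.single i 1)) ∧
      ∀ k, k ≠ i → k ≠ j → HasExp (fun y => φ y k) (Pi.single k 1) := by
  obtain ⟨σi, hσi, ei⟩ := exists_sign 𝓤 (fun y : ι → ℝ => y i)
  obtain ⟨σj, hσj, ej⟩ := exists_sign 𝓤 (fun y : ι → ℝ => y j)
  have hσi0 : σi ≠ 0 := by rcases hσi with h | h <;> simp [h]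
  have hσj0 : σj ≠ 0 := by rcases hσj with h | h <;> simp [h]
  set ρi : (ι → ℝ) → ℝ := fun y => |y i| ^ (B⁻¹ : ℝ) with hρi
  set ρj : (ι → ℝ) → ℝ := fun y => |y j| ^ (A⁻¹ : ℝ) with hρj
  have hpi : ∀ y, 0 ≤ ρi y := fun y => by positivity
  have hpj : ∀ y, 0 ≤ ρj y := fun y => by positivity
  have hmem : ∀ᶠ y in 𝓤, ρi y / ρj y ∈ Icc (0 : ℝ) 1 := by
    filter_upwards [hle] with y hy
    exact ⟨div_nonneg (hpi y) (hpj y), div_le_one_of_le₀ hy (hpj y)⟩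
  obtain ⟨c, -, hc⟩ := isCompact_Icc.ultrafilter_le_nhds (𝓤.map fun y => ρi y / ρj y)
    (le_principal_iff.2 hmem)
  have hc : Tendsto (fun y => ρi y / ρj y) 𝓤 (𝓝 c) := hc
  have hρj0 : Tendsto ρj 𝓤 (𝓝 0) := by
    have : Continuous ρj :=
      ((continuous_apply j).abs).rpow_const fun y => Or.inr (by positivity)
    have h := (this.tendsto 0).mono_left h𝓤
    simpa [hρj, Real.zero_rpow, hA] using h
  let φ : (ι → ℝ) → ι → ℝ := fun y =>
    Function.update (Function.update y j (σj * y j ^ A)) i (σi * (y j * (c + y i)) ^ B)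
  let s : (ι → ℝ) → ι → ℝ := fun y =>
    Function.update (Function.update y j (ρj y)) i (ρi y / ρj y - c)
  have hφj : ∀ y, φ y j = σj * y j ^ A := fun y => by simp [φ, hij.symm]
  have hφi : ∀ y, φ y i = σi * (y j * (c + y i)) ^ B := fun y => by simp [φ]
  have hφk : ∀ y k, k ≠ i → k ≠ j → φ y k = y k := fun y k h1 h2 => by simp [φ, h1, h2]
  have haj : AnalyticAt ℝ (fun y : ι → ℝ => y j) 0 := analyticAt_coord j 0
  have hai : AnalyticAt ℝ (fun y : ι → ℝ => c + y i) 0 :=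
    analyticAt_const.fun_add (analyticAt_coord i 0)
  have hchart : Chart φ s 𝓤 := by
    refine ⟨?_, ?_, ?_, ?_⟩
    · exact analyticAt_update (analyticAt_update analyticAt_id
        (analyticAt_const.fun_mul (haj.fun_pow A)) j)
        (analyticAt_const.fun_mul ((haj.fun_mul hai).fun_pow B)) i
    · funext k
      by_cases h1 : k = i
      · subst h1; rw [hφi]; simp [hB]
      · by_cases h2 : k = j
        · subst h2; rw [hφj]; simp [hA]
        · rw [hφk _ _ h1 h2]
    · rw [tendsto_pi_nhds]
      intro k
      by_cases h1 : k = i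
      · subst h1; simpa [s] using hc.sub_const c
      · by_cases h2 : k = j
        · subst h2; simpa [s, h1] using hρj0
        · simp only [s, Function.update_of_ne h1, Function.update_of_ne h2]
          exact ((continuous_apply k).tendsto 0).mono_left h𝓤
    · filter_upwards [ei, ej, hle] with y h1 h2 h3
      have hsj : s y j = ρj y := by simp [s, hij.symm]
      have hsi : s y i = ρi y / ρj y - c := by simp [s]
      funext k
      by_cases h1' : k = i
      · subst h1'
        rw [hφi, hsj, hsi]
        have : ρj y * (c + (ρi y / ρj y - c)) = ρi y := by
          rw [add_sub_cancel]
          by_cases h0 : ρj y = 0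
          · have : ρi y = 0 := le_antisymm (by rw [← h0]; exact h3) (hpi y)
            rw [h0, this, zero_mul]
          · field_simp
        rw [this, hρi]
        simp only
        rw [Real.rpow_inv_natCast_pow (abs_nonneg _) hB, ← h1]
      · by_cases h2' : k = j
        · subst h2'
          rw [hφj, hsj, hρj]
          simp only
          rw [Real.rpow_inv_natCast_pow (abs_nonneg _) hA, ← h2]
        · rw [hφk _ _ h1' h2']; simp [s, h1', h2']
  have hJ : HasExp (fun y => φ y j) (A • Pi.single j 1) := by
    simp only [hφj]
    simpa only [zero_add] using (hasExp_const hσj0).mul ((hasExp_coord j).pow A)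
  have hK : ∀ k, k ≠ i → k ≠ j → HasExp (fun y => φ y k) (Pi.single k 1) := by
    intro k h1 h2
    simpa only [hφk _ _ h1 h2] using hasExp_coord k
  by_cases hc0 : c = 0
  · refine ⟨φ, s, 1, hchart, hJ, ?_, hK⟩
    simp only [hφi, hc0, zero_add, one_smul]
    simpa only [zero_add] using (hasExp_const hσi0).mul
      (((hasExp_coord j).mul (hasExp_coord i)).pow B)
  · refine ⟨φ, s, 0, hchart, hJ, ?_, hK⟩
    simp only [hφi, zero_smul]
    have := (hasExp_const hσi0).mul
      (((hasExp_coord j).mul (hasExp_unit hai (by simpa using hc0))).pow B)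
    simpa only [zero_add] using this

/-- Two monomials become comparable for divisibility after a suitable monomial chart. -/
theorem toric_exp [DecidableEq ι] (N : ℕ) : ∀ (a b : (ι → ℝ) → ℝ) (α β : ι → ℕ),
    HasExp a α → HasExp b β → (Finset.univ.filter fun i => α i ≠ β i).card ≤ N →
    ∀ 𝓤 : Ultrafilter (ι → ℝ), (𝓤 : Filter (ι → ℝ)) ≤ 𝓝 0 →
    ∃ φ s, Chart φ s 𝓤 ∧ (∀ i, IsMon fun y => φ y i) ∧
      (AnDvd (fun y => a (φ y)) (fun y => b (φ y)) ∨
        AnDvd (fun y => b (φ y)) (fun y => a (φ y))) := by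
  induction N with
  | zero =>
    intro a b α β ha hb hN 𝓤 h𝓤
    refine ⟨_, _, Chart.id h𝓤, fun i => isMon_coord i, Or.inl (ha.anDvd hb fun i => ?_)⟩
    by_contra hi
    have : i ∈ (Finset.univ.filter fun i => α i ≠ β i) := by
      simp; rintro h; exact hi h.le
    simp [Finset.card_eq_zero.1 (Nat.le_zero.1 hN)] at this
  | succ N ih =>
    -- the asymmetric case; the general one follows by exchanging the two monomials
    have key : ∀ (a b : (ι → ℝ) → ℝ) (α β : ι → ℕ), HasExp a α → HasExp b β →
        (Finset.univ.filter fun i => α i ≠ β i).card ≤ N + 1 →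
        ∀ 𝓤 : Ultrafilter (ι → ℝ), (𝓤 : Filter (ι → ℝ)) ≤ 𝓝 0 → ∀ i j, β i < α i → α j < β j →
        (∀ᶠ y : ι → ℝ in 𝓤, |y i| ^ (((β j - α j : ℕ) : ℝ)⁻¹) ≤ |y j| ^ (((α i - β i : ℕ) : ℝ)⁻¹)) →
        ∃ φ s, Chart φ s 𝓤 ∧ (∀ i, IsMon fun y => φ y i) ∧
          (AnDvd (fun y => a (φ y)) (fun y => b (φ y)) ∨
            AnDvd (fun y => b (φ y)) (fun y => a (φ y))) := by
      intro a b α β ha hb hN 𝓤 h𝓤 i j hi hj hle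
      have hij : i ≠ j := by rintro rfl; omega
      obtain ⟨φ, s, δ, hch, hJ, hI, hK⟩ := toric_step hij (Nat.sub_ne_zero_of_lt hi)
        (Nat.sub_ne_zero_of_lt hj) h𝓤 hle
      set A := α i - β i with hA
      set B := β j - α j with hB
      let M : ι → ι → ℕ := fun k => if k = j then A • Pi.single j 1 else
        if k = i then B • (Pi.single j 1 + δ • Pi.single i 1) else Pi.single k 1
      have hM : ∀ k, HasExp (fun y => φ y k) (M k) := by
        intro k
        by_cases h1 : k = j
        · subst h1; simpa only [M, if_true] using hJ
        · by_cases h2 : k = i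
          · subst h2; simpa only [M, if_true, if_neg h1] using hI
          · simpa only [M, if_neg h1, if_neg h2] using hK k h2 h1
      have ha' := ha.comp hch.analytic hch.map_zero hM
      have hb' := hb.comp hch.analytic hch.map_zero hM
      have hexp : ∀ γ : ι → ℕ, ∀ k, (∑ l, γ l • M l) k =
          if k = j then γ j * A + γ i * B else if k = i then γ i * (B * δ) else γ k := by
        intro γ k
        rw [Finset.sum_apply]
        have : ∀ l, (γ l • M l) k = (if l = j then (if k = j then γ j * A else 0) else 0) +
            (if l = i then (if k = j then γ i * B else if k = i then γ i * (B * δ) else 0) else 0) +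
            (if l = k then (if k = j then 0 else if k = i then 0 else γ k) else 0) := by
          intro l
          by_cases h1 : l = j
          · subst h1
            by_cases h2 : k = l
            · subst h2; simp [M, hij.symm]
            · have : l ≠ k := fun h => h2 h.symm
              simp [M, h2, hij.symm, this]
          · by_cases h2 : l = i
            · subst h2
              by_cases h3 : k = j
              · subst h3; simp [M, hij]
              · by_cases h4 : k = l
                · subst h4; simp [M, h1]
                · have : l ≠ k := fun h => h4 h.symm
                  simp [M, h1, h3, h4, this]
            · by_cases h3 : l = k
              · subst h3; simp [M, h1, h2]
              · have : k ≠ l := fun h => h3 h.symm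
                simp [M, h1, h2, h3, this]
        simp only [this, Finset.sum_add_distrib, Finset.sum_ite_eq', Finset.mem_univ, if_true]
        split_ifs <;> simp
      have hcard : (Finset.univ.filter fun k =>
          (∑ l, α l • M l) k ≠ (∑ l, β l • M l) k).card ≤ N := by
        have hsub : (Finset.univ.filter fun k => (∑ l, α l • M l) k ≠ (∑ l, β l • M l) k) ⊆
            (Finset.univ.filter fun i => α i ≠ β i).erase j := by
          intro k hk
          rw [Finset.mem_filter, hexp, hexp] at hk
          rw [Finset.mem_erase, Finset.mem_filter]
          have hk := hk.2
          by_cases h1 : k = j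
          · exfalso
            rw [if_pos h1, if_pos h1] at hk
            apply hk
            have e1 : α i = β i + A := by omega
            have e2 : β j = α j + B := by omega
            rw [e1, e2]; ring
          · refine ⟨h1, Finset.mem_univ _, ?_⟩
            rw [if_neg h1, if_neg h1] at hk
            by_cases h2 : k = i
            · subst h2; omega
            · rwa [if_neg h2, if_neg h2] at hk
        have := Finset.card_le_card hsub
        rw [Finset.card_erase_of_mem (by simp; omega)] at this
        omega
      obtain ⟨φ', s', hch', hm', hd⟩ := ih _ _ _ _ ha' hb' hcard (𝓤.map s) hch.map_le
      exact ⟨_, _, hch.comp hch',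
        fun k => IsMon.comp ⟨_, hM k⟩ hch'.analytic hch'.map_zero hm', hd⟩
    intro a b α β ha hb hN 𝓤 h𝓤
    by_cases h1 : α ≤ β
    · exact ⟨_, _, Chart.id h𝓤, fun i => isMon_coord i, Or.inl (ha.anDvd hb h1)⟩
    by_cases h2 : β ≤ α
    · exact ⟨_, _, Chart.id h𝓤, fun i => isMon_coord i, Or.inr (hb.anDvd ha h2)⟩
    simp only [Pi.le_def, not_forall, not_le] at h1 h2
    obtain ⟨i, hi⟩ := h1
    obtain ⟨j, hj⟩ := h2
    have : ∀ᶠ y : ι → ℝ in 𝓤,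
        |y i| ^ (((β j - α j : ℕ) : ℝ)⁻¹) ≤ |y j| ^ (((α i - β i : ℕ) : ℝ)⁻¹) ∨
        |y j| ^ (((α i - β i : ℕ) : ℝ)⁻¹) ≤ |y i| ^ (((β j - α j : ℕ) : ℝ)⁻¹) :=
      Eventually.of_forall fun y => le_total _ _
    rcases Ultrafilter.eventually_or.1 this with h | h
    · exact key a b α β ha hb hN 𝓤 h𝓤 i j hi hj h
    · obtain ⟨φ, s, h1, h2, h3⟩ := key b a β α hb ha (by simpa only [ne_comm] using hN) 𝓤 h𝓤 j i hj hi h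
      exact ⟨φ, s, h1, h2, h3.symm⟩

theorem toric {a b : (ι → ℝ) → ℝ} (ha : IsMon a) (hb : IsMon b)
    {𝓤 : Ultrafilter (ι → ℝ)} (h𝓤 : (𝓤 : Filter (ι → ℝ)) ≤ 𝓝 0) :
    ∃ φ s, Chart φ s 𝓤 ∧ (∀ i, IsMon fun y => φ y i) ∧
      (AnDvd (fun y => a (φ y)) (fun y => b (φ y)) ∨
        AnDvd (fun y => b (φ y)) (fun y => a (φ y))) := by
  classical
  obtain ⟨α, hα⟩ := ha
  obtain ⟨β, hβ⟩ := hb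
  exact toric_exp _ a b α β hα hβ le_rfl 𝓤 h𝓤

/-- Finitely many monomials: after a monomial chart, one of them divides all the others. -/
theorem toric_finset {κ : Type*} {S : Finset κ} (hS : S.Nonempty) {g : κ → (ι → ℝ) → ℝ}
    (hg : ∀ k ∈ S, IsMon (g k)) {𝓤 : Ultrafilter (ι → ℝ)} (h𝓤 : (𝓤 : Filter (ι → ℝ)) ≤ 𝓝 0) :
    ∃ φ s, Chart φ s 𝓤 ∧ (∀ i, IsMon fun y => φ y i) ∧
      ∃ k₀ ∈ S, ∀ k ∈ S, AnDvd (fun y => g k₀ (φ y)) (fun y => g k (φ y)) := by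
  induction hS using Finset.Nonempty.cons_induction with
  | singleton k =>
    refine ⟨_, _, Chart.id h𝓤, fun i => isMon_coord i, k, by simp, fun l hl => ?_⟩
    rw [Finset.mem_singleton] at hl
    subst hl
    exact AnDvd.refl _
  | cons k S hk hS ih =>
    obtain ⟨φ, s, hch, hm, k₀, hk₀, hd⟩ := ih fun l hl => hg l (Finset.mem_cons_of_mem hl)
    obtain ⟨φ', s', hch', hm', hd'⟩ := toric
      ((hg k₀ (Finset.mem_cons_of_mem hk₀)).comp hch.analytic hch.map_zero hm)
      ((hg k (Finset.mem_cons_self _ _)).comp hch.analytic hch.map_zero hm) hch.map_le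
    refine ⟨_, _, hch.comp hch', fun i => (hm i).comp hch'.analytic hch'.map_zero hm', ?_⟩
    have hS' : ∀ l ∈ S, AnDvd (fun y => g k₀ (φ (φ' y))) (fun y => g l (φ (φ' y))) :=
      fun l hl => (hd l hl).comp hch'.analytic hch'.map_zero
    rcases hd' with h | h
    · refine ⟨k₀, Finset.mem_cons_of_mem hk₀, fun l hl => ?_⟩
      rcases Finset.mem_cons.1 hl with rfl | hl
      · exact h
      · exact hS' l hl
    · refine ⟨k, Finset.mem_cons_self _ _, fun l hl => ?_⟩
      rcases Finset.mem_cons.1 hl with rfl | hl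
      · exact AnDvd.refl _
      · exact h.trans (hS' l hl)

end Charts

/-! ### Expansion along a distinguished coordinate -/

section OneVariable

theorem iteratedDeriv_id_mul {h : ℝ → ℝ} (hh : AnalyticAt ℝ h 0) (k : ℕ) :
    iteratedDeriv (k + 1) (fun t => t * h t) 0 = (k + 1) * iteratedDeriv k h 0 := by
  induction k generalizing h with
  | zero =>
    have : HasDerivAt (fun t => t * h t) (1 * h 0 + 0 * deriv h 0) 0 :=
      (hasDerivAt_id (0 : ℝ)).mul hh.differentiableAt.hasDerivAt
    simp [iteratedDeriv_one, this.deriv]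
  | succ k ih =>
    have e : deriv (fun t => t * h t) =ᶠ[𝓝 0] fun t => h t + t * deriv h t := by
      filter_upwards [hh.eventually_analyticAt] with t ht
      have : HasDerivAt (fun t => t * h t) (1 * h t + t * deriv h t) t :=
        (hasDerivAt_id t).mul ht.differentiableAt.hasDerivAt
      rw [this.deriv, one_mul]
    rw [iteratedDeriv_succ', e.iteratedDeriv_eq]
    have h1 : AnalyticAt ℝ (fun t => t * deriv h t) 0 := analyticAt_id.fun_mul hh.deriv
    rw [iteratedDeriv_fun_add hh.contDiffAt h1.contDiffAt, ih hh.deriv, ← iteratedDeriv_succ']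
    push_cast
    ring

/-- The coefficients of a Taylor expansion with remainder are the derivatives. -/
theorem iteratedDeriv_of_expansion (d : ℕ) : ∀ (g : ℝ → ℝ) (a : ℕ → ℝ) (u : ℝ → ℝ),
    AnalyticAt ℝ u 0 → (∀ᶠ t in 𝓝 0, g t = ∑ i ∈ Finset.range d, a i * t ^ i + t ^ d * u t) →
    (∀ k < d, iteratedDeriv k g 0 = k.factorial * a k) ∧ iteratedDeriv d g 0 = d.factorial * u 0 := by
  induction d with
  | zero =>
    intro g a u hu hg
    refine ⟨fun k hk => absurd hk (Nat.not_lt_zero _), ?_⟩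
    simpa using hg.self_of_nhds
  | succ d ih =>
    intro g a u hu hg
    set h : ℝ → ℝ := fun t => ∑ i ∈ Finset.range d, a (i + 1) * t ^ i + t ^ d * u t with hh
    have hha : AnalyticAt ℝ h 0 :=
      (Finset.analyticAt_fun_sum _ fun i _ => analyticAt_const.fun_mul (analyticAt_id.fun_pow i)).fun_add
        ((analyticAt_id.fun_pow d).fun_mul hu)
    obtain ⟨ih1, ih2⟩ := ih h (fun i => a (i + 1)) u hu (Eventually.of_forall fun t => rfl)
    have hg' : g =ᶠ[𝓝 0] fun t => a 0 + t * h t := by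
      filter_upwards [hg] with t ht
      rw [ht, Finset.sum_range_succ', hh]
      simp only [mul_add, Finset.mul_sum, pow_succ, pow_zero, mul_one]
      rw [add_comm _ (a 0), add_assoc]
      congr 2
      · exact Finset.sum_congr rfl fun i _ => by ring
      · ring
    have hk : ∀ k, iteratedDeriv (k + 1) g 0 = (k + 1) * iteratedDeriv k h 0 := by
      intro k
      rw [hg'.iteratedDeriv_eq, ← iteratedDeriv_id_mul hha, iteratedDeriv_succ', iteratedDeriv_succ']
      congr 1
      funext t
      simp
    refine ⟨fun k hkd => ?_, ?_⟩
    · cases k with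
      | zero => simpa using hg'.self_of_nhds
      | succ k =>
        rw [hk, ih1 k (by omega), Nat.factorial_succ]; push_cast; ring
    · rw [hk, ih2, Nat.factorial_succ]; push_cast; ring

theorem eventually_zero_of_iteratedDeriv {g : ℝ → ℝ} (hg : AnalyticAt ℝ g 0)
    (h : ∀ k, iteratedDeriv k g 0 = 0) : ∀ᶠ t in 𝓝 0, g t = 0 := by
  have h1 := hg.hasFPowerSeriesAt
  simp only [h, zero_div] at h1
  have h2 : FormalMultilinearSeries.ofScalars ℝ (fun _ : ℕ => (0 : ℝ)) = 0 := by
    ext n; simp [FormalMultilinearSeries.ofScalars]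
  rw [h2] at h1
  exact h1.eventually_eq_zero

end OneVariable

section OptionCoordinates
variable {ι : Type*} [Fintype ι] {E : Type*} [NormedAddCommGroup E] [NormedSpace ℝ E]

/-- Forgetting the distinguished coordinate of `ℝ^(Option ι)`. -/
noncomputable def tl : (Option ι → ℝ) →L[ℝ] (ι → ℝ) :=
  ContinuousLinearMap.pi fun i => ContinuousLinearMap.proj (some i)

/-- The point of `ℝ^(Option ι)` with distinguished coordinate `t` and other coordinates `x`. -/
def mkp (x : ι → ℝ) (t : ℝ) : Option ι → ℝ := fun o => o.elim t x

@[simp] theorem tl_apply (x : Option ι → ℝ) (i : ι) : tl x i = x (some i) := rfl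
@[simp] theorem mkp_none (x : ι → ℝ) (t : ℝ) : mkp x t none = t := rfl
@[simp] theorem mkp_some (x : ι → ℝ) (t : ℝ) (i : ι) : mkp x t (some i) = x i := rfl
@[simp] theorem tl_mkp (x : ι → ℝ) (t : ℝ) : tl (mkp x t) = x := rfl

@[simp] theorem mkp_tl (x : Option ι → ℝ) : mkp (tl x) (x none) = x := by
  funext o; cases o <;> rfl

@[simp] theorem mkp_zero : mkp (0 : ι → ℝ) 0 = 0 := by
  funext o; cases o <;> rfl

theorem analyticAt_mkp {φ : E → ι → ℝ} {g : E → ℝ} {x : E} (hφ : AnalyticAt ℝ φ x)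
    (hg : AnalyticAt ℝ g x) : AnalyticAt ℝ (fun y => mkp (φ y) (g y)) x := by
  rw [analyticAt_pi_iff] at hφ ⊢
  intro o
  cases o with
  | none => exact hg
  | some i => exact hφ i

theorem tendsto_mkp {X : Type*} {l : Filter X} {φ : X → ι → ℝ} {g : X → ℝ}
    (hφ : Tendsto φ l (𝓝 0)) (hg : Tendsto g l (𝓝 0)) :
    Tendsto (fun y => mkp (φ y) (g y)) l (𝓝 0) := by
  rw [tendsto_pi_nhds] at hφ ⊢
  intro o
  cases o with
  | none => exact hg
  | some i => exact hφ i

theorem analyticAt_tl (x : Option ι → ℝ) : AnalyticAt ℝ (fun y : Option ι → ℝ => tl y) x :=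
  ContinuousLinearMap.analyticAt tl x

theorem analyticAt_tl_comp {c : (ι → ℝ) → ℝ} (hc : AnalyticAt ℝ c 0) :
    AnalyticAt ℝ (fun x : Option ι → ℝ => c (tl x)) 0 :=
  AnalyticAt.fun_comp_of_eq hc (analyticAt_tl 0) (map_zero _)

theorem tendsto_tl : Tendsto (tl : (Option ι → ℝ) → ι → ℝ) (𝓝 0) (𝓝 0) := by
  simpa using (tl (ι := ι)).continuous.tendsto 0

theorem eventually_slice {p : (Option ι → ℝ) → Prop} (h : ∀ᶠ x in 𝓝 0, p x) :
    ∀ᶠ x : ι → ℝ in 𝓝 0, ∀ᶠ t in 𝓝 (0 : ℝ), p (mkp x t) := by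
  have h2 : Tendsto (fun q : (ι → ℝ) × ℝ => mkp q.1 q.2) (𝓝 0 ×ˢ 𝓝 0) (𝓝 0) :=
    tendsto_mkp tendsto_fst tendsto_snd
  exact (h2.eventually h).curry

/-- `f` is regular of order `d` in the distinguished coordinate. -/
def Reg (d : ℕ) (f : (Option ι → ℝ) → ℝ) : Prop :=
  (∀ k < d, iteratedDeriv k (fun t => f (mkp 0 t)) 0 = 0) ∧
    iteratedDeriv d (fun t => f (mkp 0 t)) 0 ≠ 0

theorem analyticAt_slice_deriv {f : (Option ι → ℝ) → ℝ} (hf : AnalyticAt ℝ f 0) (k : ℕ) :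
    AnalyticAt ℝ (fun x : Option ι → ℝ => iteratedDeriv k (fun t => f (mkp (tl x) t)) (x none)) 0 := by
  induction k with
  | zero => simpa using hf
  | succ k ih =>
    set g : (Option ι → ℝ) → ℝ :=
      fun x => iteratedDeriv k (fun t => f (mkp (tl x) t)) (x none) with hg
    have h1 : AnalyticAt ℝ (fun x => fderiv ℝ g x (mkp 0 1)) 0 :=
      AnalyticAt.fun_comp
        ((ContinuousLinearMap.apply ℝ ℝ (mkp (0 : ι → ℝ) 1)).analyticAt _) ih.fderiv
    refine h1.congr ?_
    filter_upwards [ih.eventually_analyticAt] with x hx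
    have h2 : HasDerivAt (fun t => mkp (tl x) t) (mkp 0 1) (x none) := by
      rw [hasDerivAt_pi]
      intro o
      cases o with
      | none => exact hasDerivAt_id _
      | some i => exact hasDerivAt_const _ _
    have h3 : HasFDerivAt g (fderiv ℝ g x) (mkp (tl x) (x none)) := by
      rw [mkp_tl]; exact hx.differentiableAt.hasFDerivAt
    have h4 := (h3.comp_hasDerivAt (x none) h2).deriv
    rw [iteratedDeriv_succ, ← h4]
    rfl

/-- Weierstrass-type expansion of an analytic function along the distinguished coordinate. -/
theorem exists_expansion (d : ℕ) : ∀ f : (Option ι → ℝ) → ℝ, AnalyticAt ℝ f 0 →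
    ∃ (c : ℕ → (ι → ℝ) → ℝ) (U : (Option ι → ℝ) → ℝ), (∀ i, AnalyticAt ℝ (c i) 0) ∧
      AnalyticAt ℝ U 0 ∧ ∀ᶠ x in 𝓝 0,
        f x = ∑ i ∈ Finset.range d, c i (tl x) * x none ^ i + x none ^ d * U x := by
  induction d with
  | zero => exact fun f hf => ⟨fun _ _ => 0, f, fun _ => analyticAt_const, hf, by simp⟩
  | succ d ih =>
    intro f hf
    obtain ⟨h, hh, e⟩ := analytic_division_coord hf none
    obtain ⟨c, U, hc, hU, e'⟩ := ih h hh
    refine ⟨fun i => Nat.casesOn i (fun x => f (mkp x 0)) c, U, ?_, hU, ?_⟩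
    · intro i
      cases i with
      | zero =>
        have h1 : AnalyticAt ℝ (fun x : ι → ℝ => mkp x 0) 0 :=
          analyticAt_mkp analyticAt_id analyticAt_const
        exact AnalyticAt.fun_comp_of_eq hf h1 mkp_zero
      | succ i => exact hc i
    · filter_upwards [e, e'] with x h1 h2
      have hP : hyperProj none x = mkp (tl x) 0 := by
        funext o
        cases o with
        | none => exact hyperProj_same _ _
        | some i => exact hyperProj_ne (by simp) _
      rw [h1, h2, Finset.sum_range_succ', hP]
      simp only [mul_add, Finset.mul_sum, pow_succ, pow_zero, mul_one]
      have h3 : ∑ i ∈ Finset.range d, x none * (c i (tl x) * x none ^ i) =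
          ∑ i ∈ Finset.range d, c i (tl x) * (x none ^ i * x none) :=
        Finset.sum_congr rfl fun i _ => by ring
      rw [h3]
      change f (mkp (tl x) 0) + (_ + _) = _ + f (mkp (tl x) 0) + _
      rw [add_comm _ (f (mkp (tl x) 0)), add_assoc]
      congr 2
      ring

/-- The zero set of the `d`-th derivative of `f` in the distinguished coordinate is a graph near the
origin when `f` is regular of order `d + 1`. -/
theorem exists_implicit {f : (Option ι → ℝ) → ℝ} (hf : AnalyticAt ℝ f 0) {d : ℕ}
    (hd : Reg (d + 1) f) : ∃ θ : (ι → ℝ) → ℝ, AnalyticAt ℝ θ 0 ∧ θ 0 = 0 ∧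
      ∀ᶠ x in 𝓝 0, iteratedDeriv d (fun t => f (mkp x t)) (θ x) = 0 := by
  set G : (ι → ℝ) × ℝ → ℝ := fun p => iteratedDeriv d (fun t => f (mkp p.1 t)) p.2 with hG
  have hGa : AnalyticAt ℝ G (0, 0) := by
    have h1 : AnalyticAt ℝ (fun p : (ι → ℝ) × ℝ => mkp p.1 p.2) (0, 0) :=
      analyticAt_mkp analyticAt_fst analyticAt_snd
    exact AnalyticAt.fun_comp_of_eq (analyticAt_slice_deriv hf d) h1 mkp_zero
  have hG0 : G (0, 0) = 0 := hd.1 d (Nat.lt_succ_self d)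
  have hval : (fderiv ℝ G (0, 0)) (0, 1) = iteratedDeriv (d + 1) (fun t => f (mkp 0 t)) 0 := by
    have h1 : HasDerivAt (fun t : ℝ => ((0 : ι → ℝ), t)) (0, 1) 0 :=
      (hasDerivAt_const _ _).prodMk (hasDerivAt_id _)
    have h2 := (hGa.differentiableAt.hasFDerivAt.comp_hasDerivAt (0 : ℝ) h1).deriv
    rw [← h2, iteratedDeriv_succ]
    rfl
  have hinv : (fderiv ℝ G (0, 0) ∘L .inr ℝ (ι → ℝ) ℝ).IsInvertible := by
    refine ⟨ContinuousLinearEquiv.unitsEquivAut ℝ (Units.mk0 _ (hval.trans_ne hd.2)), ?_⟩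
    ext
    simp
  have hcd : ContDiffAt ℝ ⊤ G (0, 0) := hGa.contDiffAt
  have htop : (⊤ : WithTop ℕ∞) ≠ 0 := by simp
  refine ⟨hcd.implicitFunction htop hinv, ?_, ?_, ?_⟩
  · exact (hcd.contDiffAt_implicitFunction htop hinv).analyticAt
  · exact hcd.implicitFunction_apply_self htop hinv
  · have := hcd.eventually_apply_implicitFunction htop hinv
    rw [hG0] at this
    exact this

/-- After the shift `t ↦ t + θ(x')`, a function regular of order `d + 1` has an expansion in which
the coefficient of `t ^ d` vanishes identically (Tschirnhaus transformation). -/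
theorem tschirnhaus {f : (Option ι → ℝ) → ℝ} (hf : AnalyticAt ℝ f 0) {d : ℕ}
    (hd : Reg (d + 1) f) : ∃ (θ : (ι → ℝ) → ℝ) (c : ℕ → (ι → ℝ) → ℝ) (U : (Option ι → ℝ) → ℝ),
      AnalyticAt ℝ θ 0 ∧ θ 0 = 0 ∧ (∀ i, AnalyticAt ℝ (c i) 0) ∧ AnalyticAt ℝ U 0 ∧ U 0 ≠ 0 ∧
      (∀ i < d + 1, c i 0 = 0) ∧ (∀ᶠ x in 𝓝 0, c d x = 0) ∧
      ∀ᶠ x in 𝓝 0, f (mkp (tl x) (x none + θ (tl x))) =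
        ∑ i ∈ Finset.range (d + 1), c i (tl x) * x none ^ i + x none ^ (d + 1) * U x := by
  obtain ⟨θ, hθ, hθ0, e⟩ := exists_implicit hf hd
  have hS : AnalyticAt ℝ (fun x : Option ι → ℝ => mkp (tl x) (x none + θ (tl x))) 0 :=
    analyticAt_mkp (analyticAt_tl 0) ((analyticAt_coord none 0).fun_add (analyticAt_tl_comp hθ))
  have hS0 : mkp (tl (0 : Option ι → ℝ)) ((0 : Option ι → ℝ) none + θ (tl 0)) = 0 := by
    simp [hθ0]
  obtain ⟨c, U, hc, hU, e'⟩ := exists_expansion (d + 1) _ (AnalyticAt.fun_comp_of_eq hf hS hS0)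
  have hUs : ∀ᶠ x : ι → ℝ in 𝓝 0, AnalyticAt ℝ (fun t => U (mkp x t)) 0 := by
    filter_upwards [eventually_slice hU.eventually_analyticAt] with x hx
    exact AnalyticAt.fun_comp hx.self_of_nhds (analyticAt_mkp analyticAt_const analyticAt_id)
  have key : ∀ᶠ x : ι → ℝ in 𝓝 0, (∀ k < d + 1,
      iteratedDeriv k (fun t => f (mkp x t)) (θ x) = k.factorial * c k x) ∧
      iteratedDeriv (d + 1) (fun t => f (mkp x t)) (θ x) = (d + 1).factorial * U (mkp x 0) := by
    filter_upwards [hUs, eventually_slice e'] with x h1 h2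
    have := iteratedDeriv_of_expansion (d + 1) (fun t => f (mkp x (t + θ x))) (fun i => c i x)
      (fun t => U (mkp x t)) h1 h2
    simpa only [iteratedDeriv_comp_add_const (f := fun t => f (mkp x t)), zero_add] using this
  have key0 := key.self_of_nhds
  rw [hθ0] at key0
  refine ⟨θ, c, U, hθ, hθ0, hc, hU, ?_, ?_, ?_, e'⟩
  · intro h
    have := key0.2
    rw [mkp_zero, h, mul_zero] at this
    exact hd.2 this
  · intro i hi
    have := key0.1 i hi
    rw [hd.1 i hi] at this
    exact (mul_eq_zero.1 this.symm).resolve_left (by positivity)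
  · filter_upwards [key, e] with x h1 h2
    have := h1.1 d (Nat.lt_succ_self d)
    rw [h2] at this
    exact (mul_eq_zero.1 this.symm).resolve_left (by positivity)

end OptionCoordinates

/-! ### Preparation of the coefficients -/

section Monomialization
variable {ι : Type*} [Fintype ι]

/-- Local monomialization on `ℝ^ι` along every ultrafilter converging to the origin. -/
def Monomializable (ι : Type*) [Fintype ι] : Prop :=
  ∀ f : (ι → ℝ) → ℝ, AnalyticAt ℝ f 0 → (¬ ∀ᶠ x in 𝓝 0, f x = 0) →
    ∀ 𝓤 : Ultrafilter (ι → ℝ), (𝓤 : Filter (ι → ℝ)) ≤ 𝓝 0 →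
      ∃ φ s, Chart φ s 𝓤 ∧ IsMon fun y => f (φ y)

theorem germ_prod_ne_zero {E κ : Type*} [NormedAddCommGroup E] [NormedSpace ℝ E] {S : Finset κ}
    {g : κ → E → ℝ} (hg : ∀ k ∈ S, AnalyticAt ℝ (g k) 0)
    (hne : ∀ k ∈ S, ¬ ∀ᶠ x in 𝓝 0, g k x = 0) : ¬ ∀ᶠ x in 𝓝 0, ∏ k ∈ S, g k x = 0 := by
  classical
  induction S using Finset.induction_on with
  | empty =>
    intro h
    obtain ⟨x, hx⟩ := h.exists
    simp at hx
  | insert k S hk ih =>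
    intro h
    simp only [Finset.prod_insert hk] at h
    have hS : AnalyticAt ℝ (fun x => ∏ k ∈ S, g k x) 0 :=
      S.analyticAt_fun_prod fun i hi => hg i (Finset.mem_insert_of_mem hi)
    rcases germ_mul_eq_zero (hg k (Finset.mem_insert_self _ _)) hS h with h | h
    · exact hne k (Finset.mem_insert_self _ _) h
    · exact ih (fun i hi => hg i (Finset.mem_insert_of_mem hi))
        (fun i hi => hne i (Finset.mem_insert_of_mem hi)) h

/-- If a finite product is a monomial times a unit, so is each analytic factor. -/
theorem isMon_of_prod {κ : Type*} {S : Finset κ} {g : κ → (ι → ℝ) → ℝ}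
    (hg : ∀ k ∈ S, AnalyticAt ℝ (g k) 0) (h : IsMon fun x => ∏ k ∈ S, g k x) :
    ∀ k ∈ S, IsMon (g k) := by
  classical
  intro k hk
  refine isMon_of_mul (hg k hk) (h := fun x => ∏ l ∈ S.erase k, g l x)
    (Finset.analyticAt_fun_prod _ fun l hl => hg l (Finset.mem_of_mem_erase hl)) ?_
  have e : (fun y => g k y * ∏ l ∈ S.erase k, g l y) = fun y => ∏ l ∈ S, g l y :=
    funext fun y => Finset.mul_prod_erase S (fun l => g l y) hk
  rwa [e]

/-- Extraction of `N`-th roots of all coordinates. -/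
theorem exists_ramification [DecidableEq ι] {N : ℕ} (hN : N ≠ 0) {𝓤 : Ultrafilter (ι → ℝ)}
    (h𝓤 : (𝓤 : Filter (ι → ℝ)) ≤ 𝓝 0) :
    ∃ φ s, Chart φ s 𝓤 ∧ ∀ i, HasExp (fun y => φ y i) (N • Pi.single i 1) := by
  choose σ hσ e using fun i : ι => exists_sign 𝓤 (fun y : ι → ℝ => y i)
  have hσ0 : ∀ i, σ i ≠ 0 := fun i => by rcases hσ i with h | h <;> simp [h]
  refine ⟨fun y i => σ i * y i ^ N, fun y i => |y i| ^ (N⁻¹ : ℝ), ⟨?_, ?_, ?_, ?_⟩, ?_⟩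
  · rw [analyticAt_pi_iff]
    exact fun i => analyticAt_const.fun_mul ((analyticAt_coord i 0).fun_pow N)
  · funext i; simp [hN]
  · rw [tendsto_pi_nhds]
    intro i
    have : Continuous fun y : ι → ℝ => |y i| ^ (N⁻¹ : ℝ) :=
      ((continuous_apply i).abs).rpow_const fun y => Or.inr (by positivity)
    have h := (this.tendsto 0).mono_left h𝓤
    simpa [Real.zero_rpow, hN] using h
  · filter_upwards [eventually_all.2 e] with y hy
    funext i
    rw [Real.rpow_inv_natCast_pow (abs_nonneg _) hN, ← hy i]
  · intro i
    simpa only [zero_add] using (hasExp_const (hσ0 i)).mul ((hasExp_coord i).pow N)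

/-- Monomialization of the coefficients of an expansion: in a suitable chart the coefficient of
`t ^ i` is `m ^ (d - i) * b i` for a common monomial `m`, with some `b i` a unit. -/
theorem coeff_prep (hA : Monomializable ι) {d : ℕ} {c : ℕ → (ι → ℝ) → ℝ}
    (hc : ∀ i, AnalyticAt ℝ (c i) 0) (hc0 : ∀ i < d, c i 0 = 0)
    (hne : ∃ i < d, ¬ ∀ᶠ x in 𝓝 0, c i x = 0)
    {𝓤 : Ultrafilter (ι → ℝ)} (h𝓤 : (𝓤 : Filter (ι → ℝ)) ≤ 𝓝 0) :
    ∃ (φ s : (ι → ℝ) → ι → ℝ) (m : (ι → ℝ) → ℝ) (b : ℕ → (ι → ℝ) → ℝ) (i₀ : ℕ),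
      Chart φ s 𝓤 ∧ (∀ i, IsMon fun y => φ y i) ∧ IsMon m ∧ m 0 = 0 ∧
      (∀ i, AnalyticAt ℝ (b i) 0) ∧ i₀ < d ∧ b i₀ 0 ≠ 0 ∧
      (∀ i < d, ∀ᶠ y in 𝓝 0, c i (φ y) = m y ^ (d - i) * b i y) ∧
      ∀ i < d, (∀ᶠ x in 𝓝 0, c i x = 0) → b i 0 = 0 := by
  classical
  set S : Finset ℕ := (Finset.range d).filter fun i => ¬ ∀ᶠ x in 𝓝 0, c i x = 0 with hS
  have hmemS : ∀ i, i ∈ S ↔ i < d ∧ ¬ ∀ᶠ x in 𝓝 0, c i x = 0 := by simp [hS]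
  have hSne : S.Nonempty := by
    obtain ⟨i, hi, h⟩ := hne
    exact ⟨i, (hmemS i).2 ⟨hi, h⟩⟩
  -- monomialize all nonzero coefficients and all coordinates simultaneously
  let g : ℕ ⊕ ι → (ι → ℝ) → ℝ := Sum.elim c fun j x => x j
  have hga : ∀ k, AnalyticAt ℝ (g k) 0 := by
    rintro (i | j)
    · exact hc i
    · exact analyticAt_coord j 0
  have hgne : ∀ k ∈ S.disjSum Finset.univ, ¬ ∀ᶠ x in 𝓝 0, g k x = 0 := by
    rintro (i | j) hk
    · exact ((hmemS i).1 (by simpa using hk)).2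
    · exact not_eventually_coord_zero j
  obtain ⟨φ₁, s₁, hch₁, hm₁⟩ := hA (fun x => ∏ k ∈ S.disjSum Finset.univ, g k x)
    (Finset.analyticAt_fun_prod _ fun k _ => hga k)
    (germ_prod_ne_zero (fun k _ => hga k) hgne) 𝓤 h𝓤
  have hfac := isMon_of_prod (g := fun k y => g k (φ₁ y))
    (fun k _ => AnalyticAt.fun_comp_of_eq (hga k) hch₁.analytic hch₁.map_zero) hm₁
  have hcoord : ∀ j, IsMon fun y => φ₁ y j := fun j => hfac (Sum.inr j) (by simp)
  have hcm : ∀ i ∈ S, IsMon fun y => c i (φ₁ y) := fun i hi => hfac (Sum.inl i) (by simpa using hi)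
  obtain ⟨φ₂, s₂, hch₂, hm₂⟩ := exists_ramification (N := d.factorial) (Nat.factorial_ne_zero d)
    hch₁.map_le
  have hroot : ∀ i, ∃ mi vi : (ι → ℝ) → ℝ, i ∈ S → (IsMon mi ∧ AnalyticAt ℝ vi 0 ∧ vi 0 ≠ 0 ∧
      ∀ᶠ y in 𝓝 0, c i (φ₁ (φ₂ y)) = mi y ^ (d - i) * vi y) := by
    intro i
    by_cases hi : i ∈ S
    swap
    · exact ⟨0, 0, fun h => absurd h hi⟩
    obtain ⟨α, hα⟩ := hcm i hi
    obtain ⟨v, hv, hv0, e⟩ := hα.comp hch₂.analytic hch₂.map_zero hm₂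
    have hid := ((hmemS i).1 hi).1
    have hdvd : d - i ∣ d.factorial := Nat.dvd_factorial (by omega) (by omega)
    refine ⟨fun y => ∏ l, y l ^ (α l * (d.factorial / (d - i))), v, fun _ =>
      ⟨⟨_, fun _ => 1, analyticAt_const, one_ne_zero, by simp; rfl⟩, hv, hv0, ?_⟩⟩
    filter_upwards [e] with y hy
    rw [hy, ← Finset.prod_pow]
    congr 1
    refine Finset.prod_congr rfl fun l _ => ?_
    rw [← pow_mul, mul_assoc, Nat.div_mul_cancel hdvd, Finset.sum_apply,
      Finset.sum_eq_single l (fun k _ hk => by simp [hk.symm]) (by simp)]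
    simp
  choose mi vi hmv using hroot
  obtain ⟨φ₃, s₃, hch₃, hm₃, i₀, hi₀, hdvd⟩ := toric_finset hSne (g := mi)
    (fun k hk => (hmv k hk).1) (hch₁.comp hch₂).map_le
  have hq : ∀ i, ∃ q : (ι → ℝ) → ℝ, AnalyticAt ℝ q 0 ∧
      (i ∈ S → ∀ᶠ y in 𝓝 0, mi i (φ₃ y) = q y * mi i₀ (φ₃ y)) := by
    intro i
    by_cases hi : i ∈ S
    · obtain ⟨q, hq, e⟩ := hdvd i hi
      exact ⟨q, hq, fun _ => e⟩
    · exact ⟨0, analyticAt_const, fun h => absurd h hi⟩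
  choose q hqa hq using hq
  have hva : ∀ i ∈ S, AnalyticAt ℝ (fun y => vi i (φ₃ y)) 0 := fun i hi =>
    AnalyticAt.fun_comp_of_eq (hmv i hi).2.1 hch₃.analytic hch₃.map_zero
  have ht₃ := tendsto_zero_of_analytic hch₃.analytic hch₃.map_zero
  have hch := (hch₁.comp hch₂).comp hch₃
  have hi₀d := ((hmemS i₀).1 hi₀).1
  refine ⟨_, _, fun y => mi i₀ (φ₃ y), fun i => if i ∈ S then (if i = i₀ then
    fun y => vi i₀ (φ₃ y) else fun y => q i y ^ (d - i) * vi i (φ₃ y)) else 0, i₀, hch, ?_, ?_, ?_,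
    ?_, hi₀d, ?_, ?_, ?_⟩
  · intro j
    exact ((hcoord j).comp hch₂.analytic hch₂.map_zero fun l => ⟨_, hm₂ l⟩).comp hch₃.analytic
      hch₃.map_zero hm₃
  · exact (hmv i₀ hi₀).1.comp hch₃.analytic hch₃.map_zero hm₃
  · have h := (hmv i₀ hi₀).2.2.2.self_of_nhds
    rw [hch₂.map_zero, hch₁.map_zero, hc0 i₀ hi₀d] at h
    have h2 := (mul_eq_zero.1 h.symm).resolve_right (hmv i₀ hi₀).2.2.1
    simp only [hch₃.map_zero]
    exact pow_eq_zero_iff (by omega) |>.1 h2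
  · intro i
    dsimp only
    split_ifs with h1 h2
    · exact hva i₀ hi₀
    · exact ((hqa i).fun_pow _).fun_mul (hva i h1)
    · exact analyticAt_const
  · simp only [hi₀, if_true, hch₃.map_zero]
    exact (hmv i₀ hi₀).2.2.1
  · intro i hi
    by_cases h1 : i ∈ S
    · simp only [h1, if_true]
      by_cases h2 : i = i₀
      · subst h2
        simp only [if_true]
        exact ht₃.eventually (hmv i h1).2.2.2
      · simp only [h2, if_false]
        filter_upwards [ht₃.eventually (hmv i h1).2.2.2, hq i h1] with y e1 e2
        rw [e1, e2]; ring
    · simp only [h1, if_false, Pi.zero_apply, mul_zero]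
      have h2 : ∀ᶠ x in 𝓝 0, c i x = 0 := by
        by_contra h
        exact h1 ((hmemS i).2 ⟨hi, h⟩)
      exact (tendsto_zero_of_analytic hch.analytic hch.map_zero).eventually h2
  · intro i hi h
    have : i ∉ S := fun h' => ((hmemS i).1 h').2 h
    simp [this]

/-- The polynomial `u * t ^ (d + 1) + ∑ i < d + 1, β i * t ^ i` without term of degree `d` and with
some `β i ≠ 0` is not a `(d + 1)`-st power of a linear form, so its order at any point `c` is at
most `d`. This is what makes the blow-up decrease the order. -/
theorem exists_deriv_ne_zero {d : ℕ} {β : ℕ → ℝ} {u c : ℝ} (hu : u ≠ 0) (hβ : β d = 0)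
    {i₀ : ℕ} (hi₀ : i₀ < d + 1) (hβ₀ : β i₀ ≠ 0) :
    ∃ k < d + 1, iteratedDeriv k
      (fun t : ℝ => ∑ i ∈ Finset.range (d + 1), β i * (c + t) ^ i + (c + t) ^ (d + 1) * u) 0 ≠ 0 := by
  open Polynomial in
  by_contra! hcon
  set Q : ℝ[X] := ∑ i ∈ Finset.range (d + 1), C (β i) * X ^ i + C u * X ^ (d + 1) with hQ
  have hQc : ∀ k, Q.coeff k = (if k < d + 1 then β k else 0) + if k = d + 1 then u else 0 := by
    intro k
    rw [hQ, coeff_add, finsetSum_coeff]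
    rw [Finset.sum_congr rfl fun i _ => coeff_C_mul_X_pow (β i) i k, coeff_C_mul_X_pow,
      Finset.sum_ite_eq]
    congr 1
    exact if_congr Finset.mem_range rfl rfl
  have hQd : Q.natDegree ≤ d + 1 := by
    rw [natDegree_le_iff_coeff_eq_zero]
    intro k hk
    rw [hQc, if_neg (by omega), if_neg (by omega), add_zero]
  set P : ℝ[X] := taylor c Q with hP
  have hPd : P.natDegree ≤ d + 1 := by rw [hP, natDegree_taylor]; exact hQd
  have heval : ∀ t, ∑ i ∈ Finset.range (d + 1), β i * (c + t) ^ i + (c + t) ^ (d + 1) * u =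
      ∑ i ∈ Finset.range (d + 1), P.coeff i * t ^ i + t ^ (d + 1) * P.coeff (d + 1) := by
    intro t
    have h1 : P.eval t = Q.eval (t + c) := by rw [hP, taylor_eval]
    rw [eval_eq_sum_range' (n := d + 2) (by omega), Finset.sum_range_succ] at h1
    rw [mul_comm (t ^ (d + 1)), h1, hQ]
    rw [eval_add, eval_finsetSum, eval_mul, eval_C, eval_pow, eval_X, mul_comm u, add_comm t c]
    congr 1
    exact Finset.sum_congr rfl fun i _ => by rw [eval_mul, eval_C, eval_pow, eval_X]
  have hz := (iteratedDeriv_of_expansion (d + 1) _ P.coeff (fun _ => P.coeff (d + 1))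
    analyticAt_const (Eventually.of_forall heval)).1
  have hP0 : ∀ k < d + 1, P.coeff k = 0 := by
    intro k hk
    have := hz k hk
    rw [hcon k hk] at this
    exact (mul_eq_zero.1 this.symm).resolve_left (by positivity)
  have hPX : P = C (P.coeff (d + 1)) * X ^ (d + 1) := by
    ext k
    rw [coeff_C_mul_X_pow]
    split_ifs with h
    · rw [h]
    · rcases lt_or_gt_of_ne h with h | h
      · exact hP0 k h
      · exact coeff_eq_zero_of_natDegree_lt (by omega)
  have hQX : Q = C (P.coeff (d + 1)) * (X + C (-c)) ^ (d + 1) := by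
    have h1 : taylor (-c) P = Q := by rw [hP, taylor_taylor]; simp
    rw [← h1, hPX]
    simp
  set p := P.coeff (d + 1)
  have hcoef : ∀ k, Q.coeff k = p * ((-c) ^ (d + 1 - k) * ((d + 1).choose k : ℝ)) := by
    intro k
    rw [hQX, coeff_C_mul, coeff_X_add_C_pow]
  have hpu : p = u := by
    have := hcoef (d + 1)
    rw [hQc] at this
    simpa using this.symm
  have hc : c = 0 := by
    have := hcoef d
    rw [hQc, if_pos (by omega), if_neg (by omega), hβ, hpu] at this
    simp at this
    rcases this with h | h | h
    · exact absurd h hu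
    · exact h
    · exact absurd h (by positivity)
  have := hcoef i₀
  rw [hQc, if_pos hi₀, if_neg (by omega), hc] at this
  rw [neg_zero, zero_pow (by omega), zero_mul, mul_zero, add_zero] at this
  exact hβ₀ this

end Monomialization

/-! ### Monomialization of regular functions -/

section Monomialization2
variable {ι : Type*} [Fintype ι]

/-- `f` becomes a monomial times a unit in some chart adapted to `𝓤`, in which all coordinates but
the distinguished one are pulled back to monomials times units as well. -/
def Good (f : (Option ι → ℝ) → ℝ) (𝓤 : Ultrafilter (Option ι → ℝ)) : Prop :=
  ∃ φ s, Chart φ s 𝓤 ∧ (IsMon fun y => f (φ y)) ∧ ∀ i : ι, IsMon fun y => φ y (some i)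

theorem Good.congr {f g : (Option ι → ℝ) → ℝ} {𝓤 : Ultrafilter (Option ι → ℝ)} (h : Good f 𝓤)
    (e : ∀ᶠ x in 𝓝 0, g x = f x) : Good g 𝓤 := by
  obtain ⟨φ, s, hch, hm, hc⟩ := h
  exact ⟨φ, s, hch, hm.congr
    ((tendsto_zero_of_analytic hch.analytic hch.map_zero).eventually e), hc⟩

theorem Good.of_chart {f : (Option ι → ℝ) → ℝ} {𝓤 : Ultrafilter (Option ι → ℝ)}
    {ψ r : (Option ι → ℝ) → Option ι → ℝ} {φ : (ι → ℝ) → ι → ℝ} (hψ : Chart ψ r 𝓤)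
    (hφm : ∀ i, IsMon fun y => φ y i) (e : ∀ y, tl (ψ y) = φ (tl y)) (h : Good (fun y => f (ψ y)) (𝓤.map r)) : Good f 𝓤 := by
  obtain ⟨χ, s, hch, hm, hc⟩ := h
  refine ⟨_, _, hψ.comp hch, hm, fun i => ?_⟩
  have h1 : (fun y => ψ (χ y) (some i)) = fun y => φ (tl (χ y)) i := by
    funext y
    rw [← e, tl_apply]
  rw [h1]
  exact (hφm i).comp (φ := fun y => tl (χ y))
    (AnalyticAt.fun_comp_of_eq (analyticAt_tl 0) hch.analytic hch.map_zero)
    (by rw [hch.map_zero, map_zero]) hc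

theorem tendsto_coord {κ : Type*} [Fintype κ] {𝓤 : Ultrafilter (κ → ℝ)}
    (h𝓤 : (𝓤 : Filter (κ → ℝ)) ≤ 𝓝 0) (i : κ) : Tendsto (fun x : κ → ℝ => x i) 𝓤 (𝓝 0) :=
  (tendsto_pi_nhds.1 h𝓤 i)

/-- The substitution `t ↦ t + θ x`. -/
theorem chart_shift {θ : (ι → ℝ) → ℝ} (hθ : AnalyticAt ℝ θ 0) (h0 : θ 0 = 0)
    {𝓤 : Ultrafilter (Option ι → ℝ)} (h𝓤 : (𝓤 : Filter (Option ι → ℝ)) ≤ 𝓝 0) :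
    Chart (fun x => mkp (tl x) (x none + θ (tl x))) (fun x => mkp (tl x) (x none - θ (tl x))) 𝓤 := by
  refine ⟨analyticAt_mkp (analyticAt_tl 0) ((analyticAt_coord none 0).fun_add
    (analyticAt_tl_comp hθ)), by simp [h0], tendsto_mkp (tendsto_tl.mono_left h𝓤) ?_, by simp⟩
  have h1 := ((analyticAt_tl_comp hθ).continuousAt.tendsto).mono_left h𝓤
  simpa [h0] using (tendsto_coord h𝓤 none).sub h1

/-- A chart in the non-distinguished coordinates. -/
theorem chart_lift {φ s : (ι → ℝ) → ι → ℝ} {𝓤 : Ultrafilter (Option ι → ℝ)}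
    (h𝓤 : (𝓤 : Filter (Option ι → ℝ)) ≤ 𝓝 0) (h : Chart φ s (𝓤.map tl)) :
    Chart (fun x => mkp (φ (tl x)) (x none)) (fun x => mkp (s (tl x)) (x none)) 𝓤 := by
  refine ⟨analyticAt_mkp (AnalyticAt.fun_comp_of_eq h.analytic (analyticAt_tl 0) (map_zero _))
    (analyticAt_coord none 0), by simp [h.map_zero], tendsto_mkp h.tendsto
    (tendsto_coord h𝓤 none), ?_⟩
  have h1 := h.eq
  rw [Ultrafilter.coe_map, eventually_map] at h1
  filter_upwards [h1] with x hx
  rw [tl_mkp, hx, mkp_none, mkp_tl]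

/-- The blowing-up chart `t ↦ m x * (c + t)`, valid when `t / m x` tends to `c` along `𝓤`. -/
theorem chart_blowup {m : (ι → ℝ) → ℝ} (hm : AnalyticAt ℝ m 0) (h0 : m 0 = 0)
    {𝓤 : Ultrafilter (Option ι → ℝ)} (h𝓤 : (𝓤 : Filter (Option ι → ℝ)) ≤ 𝓝 0) {c C : ℝ}
    (hC : ∀ᶠ x : Option ι → ℝ in 𝓤, |x none| ≤ C * |m (tl x)|)
    (hc : Tendsto (fun x : Option ι → ℝ => x none / m (tl x)) 𝓤 (𝓝 c)) :
    Chart (fun x => mkp (tl x) (m (tl x) * (c + x none)))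
      (fun x => mkp (tl x) (x none / m (tl x) - c)) 𝓤 := by
  refine ⟨analyticAt_mkp (analyticAt_tl 0) ((analyticAt_tl_comp hm).fun_mul
    (analyticAt_const.fun_add (analyticAt_coord none 0))), by simp [h0],
    tendsto_mkp (tendsto_tl.mono_left h𝓤) (by simpa using hc.sub_const c), ?_⟩
  filter_upwards [hC] with x hx
  have : m (tl x) * (x none / m (tl x)) = x none := by
    by_cases hz : m (tl x) = 0
    · rw [hz, abs_zero, mul_zero] at hx
      rw [hz, zero_mul, abs_nonpos_iff.1 hx]
    · field_simp
  simp [this]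

/-- The case where `t / m` is unbounded along the ultrafilter: after a toric chart `t` divides `m` with
quotient vanishing at the origin, and the leading term `t ^ d * U` dominates. -/
theorem good_of_unbounded {d : ℕ} {F U : (Option ι → ℝ) → ℝ} {m : (ι → ℝ) → ℝ}
    {b : ℕ → (ι → ℝ) → ℝ} (hm : IsMon m) (hb : ∀ i, AnalyticAt ℝ (b i) 0)
    (hU : AnalyticAt ℝ U 0) (hU0 : U 0 ≠ 0)
    (hF : ∀ᶠ x in 𝓝 0, F x = ∑ i ∈ Finset.range d, m (tl x) ^ (d - i) * b i (tl x) * x none ^ i +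
      x none ^ d * U x)
    {𝓤 : Ultrafilter (Option ι → ℝ)} (h𝓤 : (𝓤 : Filter (Option ι → ℝ)) ≤ 𝓝 0)
    (hC : ¬ ∃ C : ℝ, ∀ᶠ x : Option ι → ℝ in 𝓤, |x none| ≤ C * |m (tl x)|) : Good F 𝓤 := by
  have hmt : IsMon fun x : Option ι → ℝ => m (tl x) :=
    hm.comp (φ := fun x : Option ι → ℝ => tl x) (analyticAt_tl 0) (map_zero _)
      fun i => isMon_coord (some i)
  obtain ⟨ψ, s, hch, hψ, hdvd⟩ := toric hmt (isMon_coord none) h𝓤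
  -- if `m` divided `t` in the chart, then `t / m` would be bounded along the ultrafilter
  have hbdd : ∀ q : (Option ι → ℝ) → ℝ, AnalyticAt ℝ q 0 →
      (∀ᶠ y in 𝓝 0, ψ y none = q y * m (tl (ψ y))) → False := by
    intro q hq e
    apply hC
    have h1 : ∀ᶠ y in 𝓝 0, |q y| < |q 0| + 1 :=
      hq.continuousAt.abs.eventually_lt continuousAt_const (by simp)
    refine ⟨|q 0| + 1, ?_⟩
    filter_upwards [hch.eq, hch.tendsto.eventually h1, hch.tendsto.eventually e] with x h2 h3 h4
    rw [h2] at h4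
    rw [h4, abs_mul]
    exact mul_le_mul_of_nonneg_right h3.le (abs_nonneg _)
  rcases hdvd with ⟨q, hq, e⟩ | ⟨q, hq, e⟩
  · exact (hbdd q hq e).elim
  have hq0 : q 0 = 0 := by
    by_contra h
    refine hbdd (fun y => (q y)⁻¹) (hq.inv h) ?_
    filter_upwards [e, hq.continuousAt.eventually_ne h] with y hy hne
    rw [hy]; field_simp
  have hψt := tendsto_zero_of_analytic hch.analytic hch.map_zero
  have htψ : AnalyticAt ℝ (fun y => tl (ψ y)) 0 :=
    AnalyticAt.fun_comp_of_eq (analyticAt_tl 0) hch.analytic hch.map_zero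
  have hG : AnalyticAt ℝ (fun y => ∑ i ∈ Finset.range d, q y ^ (d - i) * b i (tl (ψ y)) + U (ψ y)) 0 :=
    (Finset.analyticAt_fun_sum _ fun i _ => (hq.fun_pow _).fun_mul
      (AnalyticAt.fun_comp_of_eq (hb i) htψ (by rw [hch.map_zero, map_zero]))).fun_add
      (AnalyticAt.fun_comp_of_eq hU hch.analytic hch.map_zero)
  refine ⟨ψ, s, hch, (((hψ none).pow d).mul (isMon_unit hG ?_)).congr ?_, fun i => hψ (some i)⟩
  · rw [Finset.sum_eq_zero, zero_add, hch.map_zero]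
    · exact hU0
    · intro i hi
      rw [hq0, zero_pow (by have := Finset.mem_range.1 hi; omega), zero_mul]
  · filter_upwards [hψt.eventually hF, e] with y h1 h2
    rw [h1, h2, mul_add, Finset.mul_sum]
    congr 1
    refine Finset.sum_congr rfl fun i hi => ?_
    rw [mul_pow, ← pow_sub_mul_pow (ψ y none) (Finset.mem_range.1 hi).le]
    ring

/-- The case where `t / m` is bounded along the ultrafilter: it converges to some `c`, and in the
blowing-up chart `t = m * (c + t₁)` the function is `m ^ (d + 1)` times a function regular of
smaller order, to which the induction hypothesis `ih` applies. -/
theorem good_of_bounded {d : ℕ} {F U : (Option ι → ℝ) → ℝ} {m : (ι → ℝ) → ℝ}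
    {b : ℕ → (ι → ℝ) → ℝ} (hm : IsMon m) (hm0 : m 0 = 0) (hb : ∀ i, AnalyticAt ℝ (b i) 0)
    (hU : AnalyticAt ℝ U 0) (hU0 : U 0 ≠ 0) {i₀ : ℕ} (hi₀ : i₀ < d + 1) (hb₀ : b i₀ 0 ≠ 0)
    (hbd : b d 0 = 0)
    (hF : ∀ᶠ x in 𝓝 0, F x = ∑ i ∈ Finset.range (d + 1),
      m (tl x) ^ (d + 1 - i) * b i (tl x) * x none ^ i + x none ^ (d + 1) * U x)
    {𝓤 : Ultrafilter (Option ι → ℝ)} (h𝓤 : (𝓤 : Filter (Option ι → ℝ)) ≤ 𝓝 0) {C : ℝ}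
    (hC : ∀ᶠ x : Option ι → ℝ in 𝓤, |x none| ≤ C * |m (tl x)|)
    (ih : ∀ k < d + 1, ∀ g : (Option ι → ℝ) → ℝ, AnalyticAt ℝ g 0 → Reg k g →
      ∀ 𝓤 : Ultrafilter (Option ι → ℝ), (𝓤 : Filter (Option ι → ℝ)) ≤ 𝓝 0 → Good g 𝓤) :
    Good F 𝓤 := by
  obtain ⟨c, hc⟩ : ∃ c, Tendsto (fun x : Option ι → ℝ => x none / m (tl x)) 𝓤 (𝓝 c) := by
    have h1 : ∀ᶠ x : Option ι → ℝ in 𝓤, x none / m (tl x) ∈ Metric.closedBall (0 : ℝ) |C| := by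
      filter_upwards [hC] with x hx
      rw [mem_closedBall_zero_iff, Real.norm_eq_abs, abs_div]
      refine div_le_of_le_mul₀ (abs_nonneg _) (abs_nonneg _) (hx.trans ?_)
      exact mul_le_mul_of_nonneg_right (le_abs_self _) (abs_nonneg _)
    obtain ⟨c, -, h⟩ := (isCompact_closedBall (0 : ℝ) |C|).ultrafilter_le_nhds
      (𝓤.map fun x => x none / m (tl x)) (le_principal_iff.2 h1)
    exact ⟨c, h⟩
  have hch := chart_blowup hm.analyticAt hm0 h𝓤 hC hc
  refine Good.of_chart hch (φ := fun y => y) isMon_coord (fun y => by simp) ?_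
  set G : (Option ι → ℝ) → ℝ := fun y => ∑ i ∈ Finset.range (d + 1),
    b i (tl y) * (c + y none) ^ i +
      (c + y none) ^ (d + 1) * U (mkp (tl y) (m (tl y) * (c + y none))) with hGdef
  have hcy : AnalyticAt ℝ (fun y : Option ι → ℝ => c + y none) 0 :=
    analyticAt_const.fun_add (analyticAt_coord none 0)
  have hGa : AnalyticAt ℝ G 0 :=
    (Finset.analyticAt_fun_sum _ fun i _ => (analyticAt_tl_comp (hb i)).fun_mul
      (hcy.fun_pow _)).fun_add ((hcy.fun_pow _).fun_mul
        (AnalyticAt.fun_comp_of_eq hU hch.analytic hch.map_zero))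
  have hex : ∃ k, iteratedDeriv k (fun t => G (mkp 0 t)) 0 ≠ 0 ∧ k < d + 1 := by
    obtain ⟨k, hk, hne⟩ := exists_deriv_ne_zero (c := c) (β := fun i => b i 0) hU0 hbd hi₀ hb₀
    refine ⟨k, ?_, hk⟩
    have hs : (fun t => G (mkp 0 t)) = fun t => ∑ i ∈ Finset.range (d + 1), b i 0 * (c + t) ^ i +
        (c + t) ^ (d + 1) * U 0 := by
      funext t
      simp [hGdef, hm0]
    rwa [hs]
  classical
  have hreg : Reg (Nat.find hex) G :=
    ⟨fun k hk => by
      by_contra h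
      exact Nat.find_min hex hk ⟨h, hk.trans (Nat.find_spec hex).2⟩, (Nat.find_spec hex).1⟩
  obtain ⟨φ, s, hφ, hφm, hφc⟩ := ih _ (Nat.find_spec hex).2 G hGa hreg _ hch.map_le
  refine ⟨φ, s, hφ, (((hm.comp (φ := fun y => tl (φ y)) (AnalyticAt.fun_comp_of_eq (analyticAt_tl 0)
    hφ.analytic hφ.map_zero) (by rw [hφ.map_zero, map_zero]) hφc).pow (d + 1)).mul hφm).congr ?_, hφc⟩
  filter_upwards [((tendsto_zero_of_analytic hch.analytic hch.map_zero).comp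
    (tendsto_zero_of_analytic hφ.analytic hφ.map_zero)).eventually hF] with y hy
  simp only [Function.comp_apply, tl_mkp, mkp_none] at hy
  rw [hy, hGdef]
  simp only [mul_add, Finset.mul_sum]
  congr 1
  · refine Finset.sum_congr rfl fun i hi => ?_
    rw [← mul_add, mul_pow, ← pow_sub_mul_pow (m (tl (φ y))) (Finset.mem_range.1 hi).le]
    ring
  · rw [← mul_add, mul_pow]
    ring

/-- Local monomialization for functions regular in the distinguished coordinate, by induction on the
order: Tschirnhaus transformation, monomialization of the coefficients (which depend on fewer
variables), and a blow-up of the ultrafilter. -/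
theorem monomialize_regular (hA : Monomializable ι) (d : ℕ) :
    ∀ f : (Option ι → ℝ) → ℝ, AnalyticAt ℝ f 0 → Reg d f →
      ∀ 𝓤 : Ultrafilter (Option ι → ℝ), (𝓤 : Filter (Option ι → ℝ)) ≤ 𝓝 0 → Good f 𝓤 := by
  induction d using Nat.strong_induction_on with
  | _ d ih =>
  intro f hf hreg 𝓤 h𝓤
  cases d with
  | zero =>
    refine ⟨_, _, Chart.id h𝓤, isMon_unit hf ?_, fun i => isMon_coord _⟩
    simpa using hreg.2
  | succ d =>
  obtain ⟨θ, c, U, hθ, hθ0, hc, hU, hU0, hc0, hcd, he⟩ := tschirnhaus hf hreg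
  have hsh := chart_shift hθ hθ0 h𝓤
  refine Good.of_chart hsh (φ := fun y => y) isMon_coord (fun y => by simp) ?_
  refine Good.congr ?_ he
  set 𝓤₁ := 𝓤.map fun x : Option ι → ℝ => mkp (tl x) (x none - θ (tl x))
  have h𝓤₁ : (𝓤₁ : Filter (Option ι → ℝ)) ≤ 𝓝 0 := hsh.map_le
  clear_value 𝓤₁
  by_cases hne : ∃ i < d + 1, ¬ ∀ᶠ x in 𝓝 0, c i x = 0
  swap
  · push Not at hne
    refine Good.congr (f := fun x => x none ^ (d + 1) * U x) ⟨_, _, Chart.id h𝓤₁,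
      ((isMon_coord none).pow _).mul (isMon_unit hU hU0), fun i => isMon_coord _⟩ ?_
    have h1 : ∀ᶠ x in 𝓝 0, ∀ i ∈ Finset.range (d + 1), c i x = 0 :=
      (Filter.eventually_all_finset _).2 fun i hi => hne i (Finset.mem_range.1 hi)
    filter_upwards [tendsto_tl.eventually h1] with x hx
    rw [Finset.sum_eq_zero fun i hi => by rw [hx i hi, zero_mul], zero_add]
  obtain ⟨φ, s, m, b, i₀, hch, hφm, hm, hm0, hb, hi₀, hb₀, hcb, hb0⟩ := coeff_prep hA hc hc0 hne
    (𝓤 := 𝓤₁.map tl) (tendsto_tl.mono_left h𝓤₁)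
  have hl := chart_lift h𝓤₁ hch
  refine Good.of_chart hl (φ := φ) hφm (fun y => by simp) ?_
  have hU' : AnalyticAt ℝ (fun x : Option ι → ℝ => U (mkp (φ (tl x)) (x none))) 0 :=
    AnalyticAt.fun_comp_of_eq hU hl.analytic hl.map_zero
  have hU'0 : U (mkp (φ (tl (0 : Option ι → ℝ))) ((0 : Option ι → ℝ) none)) ≠ 0 := by
    have := hl.map_zero
    rwa [this]
  have hF : ∀ᶠ x : Option ι → ℝ in 𝓝 0, (∑ i ∈ Finset.range (d + 1),
      c i (tl (mkp (φ (tl x)) (x none))) * mkp (φ (tl x)) (x none) none ^ i +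
      mkp (φ (tl x)) (x none) none ^ (d + 1) * U (mkp (φ (tl x)) (x none))) =
      ∑ i ∈ Finset.range (d + 1), m (tl x) ^ (d + 1 - i) * b i (tl x) * x none ^ i +
        x none ^ (d + 1) * U (mkp (φ (tl x)) (x none)) := by
    have h1 : ∀ᶠ y in 𝓝 0, ∀ i ∈ Finset.range (d + 1), c i (φ y) = m y ^ (d + 1 - i) * b i y :=
      (Filter.eventually_all_finset _).2 fun i hi => hcb i (Finset.mem_range.1 hi)
    filter_upwards [tendsto_tl.eventually h1] with x hx
    simp only [tl_mkp, mkp_none]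
    rw [Finset.sum_congr rfl fun i hi => by rw [hx i hi]]
  set 𝓤₂ := 𝓤₁.map fun x : Option ι → ℝ => mkp (s (tl x)) (x none)
  have h𝓤₂ : (𝓤₂ : Filter (Option ι → ℝ)) ≤ 𝓝 0 := hl.map_le
  by_cases hC : ∃ C : ℝ, ∀ᶠ x : Option ι → ℝ in 𝓤₂, |x none| ≤ C * |m (tl x)|
  · obtain ⟨C, hC⟩ := hC
    exact good_of_bounded hm hm0 hb hU' hU'0 hi₀ hb₀ (hb0 d (by omega) hcd) hF h𝓤₂ hC ih
  · exact good_of_unbounded hm hb hU' hU'0 hF h𝓤₂ hC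

end Monomialization2

/-! ### Curve selection -/

section CurveSelection

/-- The induction step on the dimension: a linear change of coordinates makes a nonzero germ regular
in the distinguished coordinate. -/
theorem monomializable_option {ι : Type*} [Fintype ι] (hA : Monomializable ι) :
    Monomializable (Option ι) := by
  intro f hf hne 𝓤 h𝓤
  by_cases hf0 : f 0 = 0
  swap
  · exact ⟨_, _, Chart.id h𝓤, isMon_unit hf hf0⟩
  obtain ⟨r, hr, hball⟩ := Metric.eventually_nhds_iff_ball.1 hf.eventually_analyticAt
  obtain ⟨x₀, hx₀, hfx₀⟩ : ∃ x ∈ Metric.ball (0 : Option ι → ℝ) r, f x ≠ 0 := by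
    by_contra! h
    exact hne (Metric.eventually_nhds_iff_ball.2 ⟨r, hr, h⟩)
  have hx0 : x₀ ≠ 0 := by rintro rfl; exact hfx₀ hf0
  have he : (mkp 0 1 : Option ι → ℝ) ≠ 0 := fun h => by
    have := congrFun h none
    simp at this
  obtain ⟨L, hL⟩ := SeparatingDual.exists_continuousLinearEquiv_apply_eq (R := ℝ) he hx0
  have hLt : ∀ t : ℝ, L (mkp 0 t) = t • x₀ := by
    intro t
    rw [← hL, ← map_smul]
    congr 1
    funext o
    cases o <;> simp
  -- restrict `f` to the line through `x₀`
  have hg : ∃ k, iteratedDeriv k (fun t : ℝ => f (L (mkp 0 t))) 0 ≠ 0 := by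
    by_contra! h
    simp only [hLt] at h
    have hlin : ∀ t : ℝ, AnalyticAt ℝ (fun t : ℝ => t • x₀) t := fun t =>
      analyticAt_id.fun_smul analyticAt_const
    set I : Set ℝ := {t | t • x₀ ∈ Metric.ball (0 : Option ι → ℝ) r} with hI
    have hIc : IsPreconnected I := by
      have : I = (LinearMap.toSpanSingleton ℝ (Option ι → ℝ) x₀) ⁻¹' Metric.ball 0 r := rfl
      rw [this]
      exact ((convex_ball (0 : Option ι → ℝ) r).linear_preimage _).isPreconnected
    have h0I : (0 : ℝ) ∈ I := by simp [hI, hr]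
    have h1I : (1 : ℝ) ∈ I := by simpa [hI] using hx₀
    have han : AnalyticOnNhd ℝ (fun t : ℝ => f (t • x₀)) I := fun t ht =>
      AnalyticAt.fun_comp (f := fun t : ℝ => t • x₀) (hball _ ht) (hlin t)
    have hz := eventually_zero_of_iteratedDeriv (han 0 h0I) h
    have := han.eqOn_zero_of_preconnected_of_eventuallyEq_zero hIc h0I hz h1I
    simp at this
    exact hfx₀ this
  classical
  have hLa : AnalyticAt ℝ (fun x => L x) 0 := L.toContinuousLinearMap.analyticAt 0
  have hch : Chart (fun x => L x) (fun x => L.symm x) 𝓤 := by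
    refine ⟨hLa, map_zero L, ?_, by simp⟩
    have := (L.symm.continuous.tendsto 0).mono_left h𝓤
    rwa [map_zero] at this
  obtain ⟨φ, s, hφ, hm, -⟩ := monomialize_regular hA (Nat.find hg) (fun x => f (L x))
    (AnalyticAt.fun_comp_of_eq hf hLa (map_zero L))
    ⟨fun k hk => not_not.1 (Nat.find_min hg hk), Nat.find_spec hg⟩ _ hch.map_le
  exact ⟨_, _, hch.comp hφ, hm⟩

theorem exists_monomializable (n : ℕ) :
    ∃ (ι : Type) (_ : Fintype ι), Fintype.card ι = n ∧ Monomializable ι := by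
  induction n with
  | zero =>
    refine ⟨Empty, inferInstance, by simp, fun f hf hne 𝓤 h𝓤 => ⟨_, _, Chart.id h𝓤, isMon_unit hf ?_⟩⟩
    intro h
    exact hne (Eventually.of_forall fun x => by rw [Subsingleton.elim x 0, h])
  | succ n ih =>
    obtain ⟨ι, _, h1, h2⟩ := ih
    exact ⟨Option ι, inferInstance, by simp [h1], monomializable_option h2⟩

theorem exists_signType {X : Type*} (𝓤 : Ultrafilter X) (g : X → ℝ) :
    ∃ σ : SignType, ∀ᶠ x in 𝓤, SignType.sign (g x) = σ := by
  have h2 : (⋃ σ ∈ (Set.univ : Set SignType), {x | SignType.sign (g x) = σ}) ∈ 𝓤 := by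
    filter_upwards with x
    simp
  obtain ⟨σ, -, h⟩ := (Ultrafilter.finite_biUnion_mem_iff (Set.toFinite _)).1 h2
  exact ⟨σ, h⟩

/-- Curve selection in `ℝ^ι`. In a chart where all `F k` are monomials times units, their signs depend
only on the signs of the coordinates; the curve is the image of a ray in the orthant that carries
the lifted ultrafilter. -/
theorem curve_selection_pi {ι : Type*} [Fintype ι] (hA : Monomializable ι) {κ : Type*} [Fintype κ]
    {F : κ → (ι → ℝ) → ℝ} (hF : ∀ k, AnalyticAt ℝ (F k) 0) {𝓤 : Ultrafilter (ι → ℝ)}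
    (h𝓤 : (𝓤 : Filter (ι → ℝ)) ≤ 𝓝 0) :
    ∃ p : ℝ → ι → ℝ, AnalyticAt ℝ p 0 ∧ p 0 = 0 ∧ ∀ k, ∃ σ : SignType,
      (∀ᶠ x in 𝓤, SignType.sign (F k x) = σ) ∧
        ∀ᶠ t in 𝓝[>] 0, SignType.sign (F k (p t)) = σ := by
  classical
  set S : Finset κ := Finset.univ.filter fun k => ¬ ∀ᶠ x in 𝓝 0, F k x = 0 with hS
  obtain ⟨φ, s, hch, hm⟩ := hA (fun x => ∏ k ∈ S, F k x)
    (Finset.analyticAt_fun_prod _ fun k _ => hF k)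
    (germ_prod_ne_zero (fun k _ => hF k) fun k hk => by simpa [hS] using hk) 𝓤 h𝓤
  have hfac := isMon_of_prod (g := fun k y => F k (φ y))
    (fun k _ => AnalyticAt.fun_comp_of_eq (hF k) hch.analytic hch.map_zero) hm
  choose τ hτ using fun j : ι => exists_signType (𝓤.map s) (fun y : ι → ℝ => y j)
  have hline : AnalyticAt ℝ (fun t : ℝ => fun j => t * ((τ j : SignType) : ℝ)) 0 := by
    rw [analyticAt_pi_iff]
    exact fun j => analyticAt_id.fun_mul analyticAt_const
  have hline0 : (fun j => (0 : ℝ) * ((τ j : SignType) : ℝ)) = 0 := by funext j; simp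
  have hpa : AnalyticAt ℝ (fun t : ℝ => φ fun j => t * ((τ j : SignType) : ℝ)) 0 :=
    AnalyticAt.fun_comp_of_eq hch.analytic hline hline0
  refine ⟨_, hpa, by simp only [hline0, hch.map_zero], fun k => ?_⟩
  have hp0 : Tendsto (fun t : ℝ => φ fun j => t * ((τ j : SignType) : ℝ)) (𝓝[>] 0) (𝓝 0) := by
    have := hpa.continuousAt.tendsto.mono_left (nhdsWithin_le_nhds (s := Ioi 0))
    simpa only [hline0, hch.map_zero] using this
  by_cases hk : k ∈ S
  swap
  · have hz : ∀ᶠ x in 𝓝 0, F k x = 0 := by simpa [hS] using hk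
    exact ⟨0, (hz.filter_mono h𝓤).mono fun x hx => by rw [hx, sign_zero],
      (hp0.eventually hz).mono fun x hx => by rw [hx, sign_zero]⟩
  obtain ⟨α, v, hv, hv0, e⟩ := hfac k hk
  have hvs : ∀ᶠ y in 𝓝 0, SignType.sign (v y) = SignType.sign (v 0) := by
    rcases lt_or_gt_of_ne hv0 with h | h
    · filter_upwards [hv.continuousAt.eventually_lt continuousAt_const h] with y hy
      rw [sign_neg hy, sign_neg h]
    · filter_upwards [continuousAt_const.eventually_lt hv.continuousAt h] with y hy
      rw [sign_pos hy, sign_pos h]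
  have key : ∀ y : ι → ℝ, (∀ j, SignType.sign (y j) = τ j) →
      F k (φ y) = (∏ i, y i ^ α i) * v y → SignType.sign (v y) = SignType.sign (v 0) →
      SignType.sign (F k (φ y)) = (∏ i, τ i ^ α i) * SignType.sign (v 0) := by
    intro y h1 h2 h3
    rw [h2, sign_mul, h3]
    congr 1
    change signHom _ = _
    rw [map_prod]
    refine Finset.prod_congr rfl fun j _ => ?_
    rw [map_pow]
    congr 1
    exact h1 j
  refine ⟨(∏ i, τ i ^ α i) * SignType.sign (v 0), ?_, ?_⟩
  · filter_upwards [hch.eq, hch.tendsto.eventually e, hch.tendsto.eventually hvs,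
      eventually_all.2 hτ] with x h1 h2 h3 h4
    have := key (s x) h4 h2 h3
    rwa [h1] at this
  · have hl : Tendsto (fun t : ℝ => fun j => t * ((τ j : SignType) : ℝ)) (𝓝[>] 0) (𝓝 0) := by
      have := hline.continuousAt.tendsto.mono_left (nhdsWithin_le_nhds (s := Ioi 0))
      simpa only [hline0] using this
    filter_upwards [hl.eventually e, hl.eventually hvs, self_mem_nhdsWithin] with t h2 h3 ht
    refine key _ (fun j => ?_) h2 h3
    rw [sign_mul, sign_pos (mem_Ioi.1 ht), one_mul]
    cases τ j <;> simp

/-- Curve selection lemma: for an ultrafilter converging to the origin there is an analytic curve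
along which finitely many given analytic functions have the signs they have along the ultrafilter. -/
theorem curve_selection {E : Type*} [NormedAddCommGroup E] [NormedSpace ℝ E] [FiniteDimensional ℝ E]
    {κ : Type*} [Fintype κ]
    {F : κ → E → ℝ} (hF : ∀ k, AnalyticAt ℝ (F k) 0) {𝓤 : Ultrafilter E}
    (h𝓤 : (𝓤 : Filter E) ≤ 𝓝 0) :
    ∃ p : ℝ → E, AnalyticAt ℝ p 0 ∧ p 0 = 0 ∧ ∀ k, ∃ σ : SignType,
      (∀ᶠ x in 𝓤, SignType.sign (F k x) = σ) ∧
        ∀ᶠ t in 𝓝[>] 0, SignType.sign (F k (p t)) = σ := by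
  obtain ⟨ι, _, hcard, hA⟩ := exists_monomializable (Module.finrank ℝ E)
  let L : (ι → ℝ) ≃L[ℝ] E := ContinuousLinearEquiv.ofFinrankEq (by simp [hcard])
  have hLa : ∀ x, AnalyticAt ℝ (fun x => L x) x := L.toContinuousLinearMap.analyticAt
  have hT : Tendsto (fun x => L.symm x) 𝓤 (𝓝 0) := by
    have := (L.symm.continuous.tendsto 0).mono_left h𝓤
    rwa [map_zero] at this
  obtain ⟨p, hp, hp0, h⟩ := curve_selection_pi hA (F := fun k x => F k (L x))
    (fun k => AnalyticAt.fun_comp_of_eq (hF k) (hLa 0) (map_zero L)) (𝓤 := 𝓤.map fun x => L.symm x) hT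
  refine ⟨fun t => L (p t), AnalyticAt.fun_comp (hLa _) hp, by simp [hp0], fun k => ?_⟩
  obtain ⟨σ, h1, h2⟩ := h k
  refine ⟨σ, ?_, h2⟩
  rw [Ultrafilter.coe_map, eventually_map] at h1
  simpa using h1

end CurveSelection

/-! ### Milnor's lemma -/

section Milnor
open ComplexConjugate
variable {E : Type*} [NormedAddCommGroup E] [InnerProductSpace ℂ E]

/-- Leading term of an analytic curve and of its derivative. -/
theorem exists_pow_smul {V : Type*} [NormedAddCommGroup V] [NormedSpace ℝ V] [CompleteSpace V]
    {q : ℝ → V} (hq : AnalyticAt ℝ q 0) (hq0 : q 0 = 0)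
    (hne : ¬ ∀ᶠ t in 𝓝 0, q t = 0) : ∃ (m : ℕ) (a : ℝ → V), AnalyticAt ℝ a 0 ∧ a 0 ≠ 0 ∧
      ∀ᶠ t in 𝓝 0, q t = t ^ (m + 1) • a t ∧
        deriv q t = t ^ m • (((m + 1 : ℕ) : ℝ) • a t + t • deriv a t) := by
  obtain ⟨m, a, ha, ha0, e⟩ := hq.exists_eventuallyEq_pow_smul_nonzero_iff.2 hne
  simp only [sub_zero] at e
  cases m with
  | zero =>
    have := e.self_of_nhds
    simp [hq0] at this
    exact absurd this.symm ha0
  | succ m =>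
    refine ⟨m, a, ha, ha0, ?_⟩
    filter_upwards [e, e.eventually_nhds, ha.eventually_analyticAt] with t h1 h2 h3
    refine ⟨h1, ?_⟩
    have h4 : q =ᶠ[𝓝 t] fun z => z ^ (m + 1) • a z := h2
    rw [h4.deriv_eq]
    have := ((hasDerivAt_pow (m + 1) t).fun_smul h3.differentiableAt.hasDerivAt).deriv
    rw [this]
    simp only [Nat.add_sub_cancel, pow_succ, smul_add, smul_smul]
    rw [add_comm, mul_comm (t ^ m) (((m + 1 : ℕ) : ℝ))]

/-- Comparison of leading terms along an analytic curve `p`, with `q = f ∘ p` and `r = df(p)`: if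
`q ~ a t ^ (m + 1)` and `p ~ b t ^ (l + 1)`, then `conj q * r` is asymptotic to the positive number
`(m + 1) / (l + 1) * ‖a‖ ^ 2 * t ^ (2 (m + 1))`. -/
theorem curve_re_pos [CompleteSpace E] {p : ℝ → E} {q r : ℝ → ℂ} (hp : AnalyticAt ℝ p 0) (hp0 : p 0 = 0)
    (hq : AnalyticAt ℝ q 0) (hq0 : q 0 = 0) (hpne : ¬ ∀ᶠ t in 𝓝 0, p t = 0)
    (hqne : ¬ ∀ᶠ t in 𝓝 0, q t = 0)
    (hr : ∀ᶠ t in 𝓝[>] 0, (‖p t‖ : ℂ) ^ 2 * deriv q t = r t * inner ℂ (p t) (deriv p t)) :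
    ∀ᶠ t in 𝓝[>] 0, 0 < (conj (q t) * r t).re := by
  obtain ⟨m, a, ha, ha0, ea⟩ := exists_pow_smul hq hq0 hqne
  obtain ⟨l, b, hb, hb0, eb⟩ := exists_pow_smul hp hp0 hpne
  set X : ℝ → ℂ := fun t => conj (a t) * (((m + 1 : ℕ) : ℝ) • a t + t • deriv a t) with hX
  set Y : ℝ → ℂ := fun t => inner ℂ (b t) (((l + 1 : ℕ) : ℝ) • b t + t • deriv b t) with hY
  have hXc : ContinuousAt X 0 := by
    have h1 := ha.continuousAt
    have h2 := ha.deriv.continuousAt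
    exact (Complex.continuous_conj.continuousAt.comp h1).mul
      (ContinuousAt.fun_add (h1.fun_const_smul _) (ContinuousAt.fun_smul continuousAt_id h2))
  have hYc : ContinuousAt Y 0 := by
    have h1 := hb.continuousAt
    have h2 := hb.deriv.continuousAt
    exact h1.inner (𝕜 := ℂ) (ContinuousAt.fun_add (h1.fun_const_smul _) (ContinuousAt.fun_smul continuousAt_id h2))
  have hX0 : X 0 = (((m + 1 : ℕ) * ‖a 0‖ ^ 2 : ℝ) : ℂ) := by
    simp only [hX, Complex.real_smul]
    push_cast
    rw [← Complex.conj_mul']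
    ring
  have hb2 : inner ℂ (b 0) (b 0) = ((‖b 0‖ ^ 2 : ℝ) : ℂ) := by
    rw [inner_self_eq_norm_sq_to_K]; simp
  have hY0 : Y 0 = (((l + 1 : ℕ) * ‖b 0‖ ^ 2 : ℝ) : ℂ) := by
    simp only [hY, zero_smul, add_zero]
    rw [← Complex.coe_smul, inner_smul_right, hb2]
    push_cast
    ring
  have hbn : 0 < ‖b 0‖ := norm_pos_iff.2 hb0
  have han : 0 < ‖a 0‖ := norm_pos_iff.2 ha0
  have hY0' : Y 0 ≠ 0 := by
    rw [hY0]
    exact_mod_cast (by positivity : ((l + 1 : ℕ) * ‖b 0‖ ^ 2 : ℝ) ≠ 0)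
  set Z : ℝ → ℂ := fun t => (‖b t‖ : ℂ) ^ 2 * X t / Y t with hZ
  have hZc : ContinuousAt Z 0 := by
    refine ContinuousAt.div (ContinuousAt.mul (ContinuousAt.pow ?_ 2) hXc) hYc hY0'
    exact Complex.continuous_ofReal.continuousAt.comp hb.continuousAt.norm
  have hZ0 : 0 < (Z 0).re := by
    have : Z 0 = ((‖b 0‖ ^ 2 * ((m + 1 : ℕ) * ‖a 0‖ ^ 2) / ((l + 1 : ℕ) * ‖b 0‖ ^ 2) : ℝ) : ℂ) := by
      simp only [hZ]
      rw [hX0, hY0]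
      push_cast
      ring
    rw [this, Complex.ofReal_re]
    positivity
  have h1 : ∀ᶠ t in 𝓝 0, 0 < (Z t).re :=
    continuousAt_const.eventually_lt (Complex.continuous_re.continuousAt.comp hZc) hZ0
  filter_upwards [nhdsWithin_le_nhds h1, nhdsWithin_le_nhds ea, nhdsWithin_le_nhds eb, hr,
    nhdsWithin_le_nhds (hYc.eventually_ne hY0'), self_mem_nhdsWithin]
    with t h1 ⟨h2, h2'⟩ ⟨h3, h3'⟩ h4 h5 ht
  have ht : (0 : ℝ) < t := ht
  have htc : (t : ℂ) ≠ 0 := by exact_mod_cast ht.ne'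
  rw [h3, h2', h3'] at h4
  have h6 : (inner ℂ (t ^ (l + 1) • b t) (t ^ l • (((l + 1 : ℕ) : ℝ) • b t + t • deriv b t)) : ℂ) =
      (t : ℂ) ^ (l + 1) * (t : ℂ) ^ l * Y t := by
    simp only [hY]
    rw [← Complex.coe_smul (t ^ (l + 1)), ← Complex.coe_smul (t ^ l), inner_smul_left,
      inner_smul_right, Complex.conj_ofReal]
    push_cast
    ring
  have h7 : conj (q t) * (t ^ m • (((m + 1 : ℕ) : ℝ) • a t + t • deriv a t)) =
      (t : ℂ) ^ (m + 1) * (t : ℂ) ^ m * X t := by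
    simp only [hX]
    rw [h2]
    simp only [Complex.real_smul, map_mul, Complex.conj_ofReal]
    push_cast
    ring
  have h8 : (‖t ^ (l + 1) • b t‖ : ℂ) = (t : ℂ) ^ (l + 1) * ‖b t‖ := by
    rw [norm_smul, Real.norm_eq_abs, abs_of_pos (by positivity)]
    push_cast
    ring
  rw [h6, h8] at h4
  have h9 : conj (q t) * r t = ((t ^ (2 * (m + 1)) : ℝ) : ℂ) * Z t := by
    have h10 := congrArg (fun z => conj (q t) * z) h4
    rw [mul_left_comm, h7] at h10
    simp only [hZ]
    push_cast
    rw [← mul_div_assoc, eq_div_iff h5]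
    have h11 : (t : ℂ) ^ (l + 1) * (t : ℂ) ^ l ≠ 0 := by positivity
    apply mul_left_cancel₀ h11
    linear_combination -h10
  rw [h9, Complex.re_ofReal_mul]
  positivity

/-- Milnor's lemma: near the origin, at points where the gradient of `log f` is a complex multiple
of the position vector `z`, the multiple has positive real part. -/
theorem milnor_lemma [FiniteDimensional ℂ E] {f : E → ℂ} (hf : AnalyticAt ℂ f 0) (hf0 : f 0 = 0) :
    ∃ ε > 0, ∀ z ∈ Metric.ball (0 : E) ε, f z ≠ 0 →
      (∀ w, (‖z‖ : ℂ) ^ 2 * fderiv ℂ f z w = fderiv ℂ f z z * inner ℂ z w) →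
      0 < (conj (f z) * fderiv ℂ f z z).re := by
  have : CompleteSpace E := FiniteDimensional.complete ℂ E
  rw [← Metric.eventually_nhds_iff_ball]
  by_contra hcon
  rw [not_eventually] at hcon
  push Not at hcon
  set A : Set E := {z | f z ≠ 0 ∧ (∀ w, (‖z‖ : ℂ) ^ 2 * fderiv ℂ f z w =
    fderiv ℂ f z z * inner ℂ z w) ∧ (conj (f z) * fderiv ℂ f z z).re ≤ 0} with hA
  have hne : (𝓝 (0 : E) ⊓ 𝓟 A).NeBot := frequently_mem_iff_neBot.1 hcon
  set 𝓤 : Ultrafilter E := Ultrafilter.of (𝓝 (0 : E) ⊓ 𝓟 A)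
  have h𝓤 : (𝓤 : Filter E) ≤ 𝓝 0 := (Ultrafilter.of_le _).trans inf_le_left
  have h𝓤A : ∀ᶠ z in 𝓤, z ∈ A := le_principal_iff.1 ((Ultrafilter.of_le _).trans inf_le_right)
  have hfR : AnalyticAt ℝ f 0 := hf.restrictScalars
  have hDR : AnalyticAt ℝ (fderiv ℂ f) 0 := hf.fderiv.restrictScalars
  let e := stdOrthonormalBasis ℂ E
  have hev : ∀ {u : E → E}, ContDiffAt ℝ ⊤ u 0 → ContDiffAt ℝ ⊤ (fun z => fderiv ℂ f z (u z)) 0 := by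
    intro u hu
    have h1 : ContDiffAt ℝ ⊤ (fun z => ContinuousLinearMap.restrictScalarsL ℂ E ℂ ℝ ℝ (fderiv ℂ f z)) 0 :=
      (ContinuousLinearMap.contDiff _).contDiffAt.comp 0 hDR.contDiffAt
    exact h1.clm_apply hu
  let F : Fin 3 → E → ℝ := ![fun z => ‖f z‖ ^ 2,
    fun z => ∑ i, ‖(‖z‖ : ℂ) ^ 2 * fderiv ℂ f z (e i) - fderiv ℂ f z z * inner ℂ z (e i)‖ ^ 2,
    fun z => (conj (f z) * fderiv ℂ f z z).re]
  have hFa : ∀ k, AnalyticAt ℝ (F k) 0 := by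
    have hn : ContDiffAt ℝ ⊤ (fun z : E => (‖z‖ : ℂ) ^ 2) 0 := by
      have : (fun z : E => (‖z‖ : ℂ) ^ 2) = fun z => (inner ℂ z z : ℂ) := by
        funext z
        rw [inner_self_eq_norm_sq_to_K]; rfl
      rw [this]
      exact ContDiffAt.inner ℂ (f := fun z : E => z) contDiffAt_id contDiffAt_id
    intro k
    apply ContDiffAt.analyticAt
    fin_cases k
    · exact hfR.contDiffAt.norm_sq ℝ
    · change ContDiffAt ℝ ⊤ (fun z => ∑ i, ‖(‖z‖ : ℂ) ^ 2 * fderiv ℂ f z (e i) -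
        fderiv ℂ f z z * inner ℂ z (e i)‖ ^ 2) 0
      refine ContDiffAt.sum fun i _ => ContDiffAt.norm_sq ℝ ?_
      exact (hn.mul (hev (u := fun _ => e i) contDiffAt_const)).sub
        ((hev (u := fun z => z) contDiffAt_id).mul (ContDiffAt.inner ℂ (f := fun z : E => z) contDiffAt_id contDiffAt_const))
    · refine Complex.reCLM.contDiff.contDiffAt.comp 0 (ContDiffAt.mul ?_ (hev (u := fun z => z) contDiffAt_id))
      exact Complex.conjCLE.contDiff.contDiffAt.comp 0 hfR.contDiffAt
  obtain ⟨p, hp, hp0, hcurve⟩ := curve_selection hFa h𝓤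
  -- the curve stays in `A`
  have hpA0 : ∀ᶠ t in 𝓝[>] 0, f (p t) ≠ 0 := by
    obtain ⟨σ, h1, h2⟩ := hcurve 0
    obtain ⟨z, hz, hzA⟩ := (h1.and h𝓤A).exists
    filter_upwards [h2] with t ht hft
    rw [← hz] at ht
    have h3 : SignType.sign (F 0 z) = 1 := sign_pos (by
      change 0 < ‖f z‖ ^ 2
      have := norm_pos_iff.2 hzA.1
      positivity)
    have h4 : F 0 (p t) = 0 := by change ‖f (p t)‖ ^ 2 = 0; simp [hft]
    rw [h3, h4] at ht
    simp at ht
  have hpA1 : ∀ᶠ t in 𝓝[>] 0, ∀ w, (‖p t‖ : ℂ) ^ 2 * fderiv ℂ f (p t) w =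
      fderiv ℂ f (p t) (p t) * inner ℂ (p t) w := by
    obtain ⟨σ, h1, h2⟩ := hcurve 1
    obtain ⟨z, hz, hzA⟩ := (h1.and h𝓤A).exists
    have h3 : F 1 z = 0 := by
      change ∑ i, ‖(‖z‖ : ℂ) ^ 2 * fderiv ℂ f z (e i) - fderiv ℂ f z z * inner ℂ z (e i)‖ ^ 2 = 0
      exact Finset.sum_eq_zero fun i _ => by rw [hzA.2.1, sub_self]; simp
    filter_upwards [h2] with t ht
    rw [← hz, h3, sign_zero, sign_eq_zero_iff] at ht
    change ∑ i, ‖(‖p t‖ : ℂ) ^ 2 * fderiv ℂ f (p t) (e i) -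
      fderiv ℂ f (p t) (p t) * inner ℂ (p t) (e i)‖ ^ 2 = 0 at ht
    have h4 : ∀ i, (‖p t‖ : ℂ) ^ 2 * fderiv ℂ f (p t) (e i) -
        fderiv ℂ f (p t) (p t) * inner ℂ (p t) (e i) = 0 := by
      intro i
      have := (Finset.sum_eq_zero_iff_of_nonneg fun i _ => by positivity).1 ht i (Finset.mem_univ i)
      simpa using this
    have h5 : (‖p t‖ : ℂ) ^ 2 • fderiv ℂ f (p t) = fderiv ℂ f (p t) (p t) • innerSL ℂ (p t) := by
      apply ContinuousLinearMap.coe_injective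
      apply e.toBasis.ext
      intro i
      simpa using sub_eq_zero.1 (h4 i)
    intro w
    simpa using congrArg (fun L => L w) h5
  have hpA2 : ∀ᶠ t in 𝓝[>] 0, (conj (f (p t)) * fderiv ℂ f (p t) (p t)).re ≤ 0 := by
    obtain ⟨σ, h1, h2⟩ := hcurve 2
    obtain ⟨z, hz, hzA⟩ := (h1.and h𝓤A).exists
    filter_upwards [h2] with t ht
    by_contra! hpos
    have h3 : SignType.sign (F 2 (p t)) = 1 := sign_pos hpos
    rw [h3, ← hz] at ht
    exact absurd (sign_eq_one_iff.1 ht.symm) (not_lt.2 hzA.2.2)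
  have hpt : Tendsto p (𝓝 0) (𝓝 0) := by simpa [ContinuousAt, hp0] using hp.continuousAt
  have hder : ∀ᶠ t in 𝓝 0, deriv (fun t => f (p t)) t = fderiv ℂ f (p t) (deriv p t) := by
    filter_upwards [hpt.eventually hf.eventually_analyticAt, hp.eventually_analyticAt] with t h1 h2
    have h3 := (h1.differentiableAt.hasFDerivAt.restrictScalars ℝ).comp_hasDerivAt t
      h2.differentiableAt.hasDerivAt
    exact h3.deriv
  have hpos := curve_re_pos (p := p) (q := fun t => f (p t)) (r := fun t => fderiv ℂ f (p t) (p t))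
    hp hp0 (AnalyticAt.fun_comp_of_eq hfR hp hp0) (by simp [hp0, hf0]) (fun h => by
      obtain ⟨t, h1, h2⟩ := (hpA0.and (nhdsWithin_le_nhds h)).exists
      exact h1 (by rw [h2, hf0])) (fun h => by
      obtain ⟨t, h1, h2⟩ := (hpA0.and (nhdsWithin_le_nhds h)).exists
      exact h1 h2) (by
      filter_upwards [nhdsWithin_le_nhds hder, hpA1] with t h1 h2
      rw [h1, h2])
  obtain ⟨t, h1, h2⟩ := (hpos.and hpA2).exists
  exact absurd h1 (not_lt.2 h2)

end Milnor

/-! ### The vector field and its flow -/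

section Field
open ComplexConjugate
variable {E : Type*} [NormedAddCommGroup E] [InnerProductSpace ℂ E]

/-- The Riesz representation as a real-linear map; over `ℂ` it is only conjugate-linear. -/
noncomputable def rieszR (E : Type*) [NormedAddCommGroup E] [InnerProductSpace ℂ E]
    [CompleteSpace E] : (StrongDual ℂ E) →L[ℝ] E where
  toFun L := (InnerProductSpace.toDual ℂ E).symm L
  map_add' := map_add _
  map_smul' c L := by
    rw [← Complex.coe_smul, map_smulₛₗ, Complex.conj_ofReal, Complex.coe_smul]
    rfl
  cont := (InnerProductSpace.toDual ℂ E).symm.continuous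

theorem rieszR_inner [CompleteSpace E] (L : StrongDual ℂ E) (w : E) :
    inner ℂ (rieszR E L) w = L w := InnerProductSpace.toDual_symm_apply

/-- The vector field of the proof. With `g` the gradient of `f` and `zt` the component of `z`
orthogonal to `g`, it is `v = (f / ‖g‖ ^ 2) g + c zt` for a real function `c`. The first term gives
`df(v) = f`; since `Re ⟪z, v⟫ = A + c B` with `B = ‖zt‖ ^ 2`, and `A > 0` where `B = 0` by Milnor's
lemma, the choice `c = B / (√(A ^ 2 + B ^ 2) + A)` is smooth and gives
`Re ⟪z, v⟫ = √(A ^ 2 + B ^ 2) > 0`. -/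
theorem exists_field [CompleteSpace E] {f : E → ℂ} {Ω : Set E}
    (hf : AnalyticOnNhd ℂ f Ω)
    (hM : ∀ z ∈ Ω, f z ≠ 0 ∧
      ((∀ w, (‖z‖ : ℂ) ^ 2 * fderiv ℂ f z w = fderiv ℂ f z z * inner ℂ z w) →
        0 < (conj (f z) * fderiv ℂ f z z).re)) :
    ∃ v : E → E, (∀ z ∈ Ω, ContDiffAt ℝ 1 v z) ∧
      ∀ z ∈ Ω, fderiv ℂ f z (v z) = f z ∧ 0 < (inner ℂ z (v z)).re := by
  set g : E → E := fun z => rieszR E (fderiv ℂ f z) with hg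
  have hgi : ∀ z w, inner ℂ (g z) w = fderiv ℂ f z w := fun z w => rieszR_inner _ _
  have hgi' : ∀ z w, inner ℂ w (g z) = conj (fderiv ℂ f z w) := fun z w => by
    rw [← hgi, inner_conj_symm]
  have hsq : ∀ x : E, inner ℂ x x = ((‖x‖ ^ 2 : ℝ) : ℂ) := fun x => by
    rw [inner_self_eq_norm_sq_to_K]; simp
  have hg0 : ∀ z ∈ Ω, g z ≠ 0 := by
    intro z hz h
    have h1 : ∀ w, fderiv ℂ f z w = 0 := fun w => by rw [← hgi, h, inner_zero_left]
    have := (hM z hz).2 fun w => by simp [h1]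
    simp [h1] at this
  -- component of the position vector tangent to the level set of `f`
  set zt : E → E := fun z => z - (inner ℂ (g z) z / ((‖g z‖ ^ 2 : ℝ) : ℂ)) • g z with hzt
  set A : E → ℝ := fun z => (conj (f z) * inner ℂ (g z) z).re / ‖g z‖ ^ 2 with hA
  set B : E → ℝ := fun z => ‖zt z‖ ^ 2 with hB
  have hB0 : ∀ z, 0 ≤ B z := fun z => by positivity
  have hAB : ∀ z ∈ Ω, B z = 0 → 0 < A z := by
    intro z hz h
    have hN : 0 < ‖g z‖ := norm_pos_iff.2 (hg0 z hz)
    have hz0 : zt z = 0 := by simpa [hB] using h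
    have hzz : z = (inner ℂ (g z) z / ((‖g z‖ ^ 2 : ℝ) : ℂ)) • g z := sub_eq_zero.1 hz0
    have hNc : ((‖g z‖ ^ 2 : ℝ) : ℂ) ≠ 0 := by exact_mod_cast (by positivity : ‖g z‖ ^ 2 ≠ 0)
    have h1 : ∀ w, inner ℂ z w = conj (fderiv ℂ f z z) / ((‖g z‖ ^ 2 : ℝ) : ℂ) * fderiv ℂ f z w := by
      intro w
      conv_lhs => rw [hzz]
      rw [inner_smul_left, hgi, hgi, map_div₀, Complex.conj_ofReal]
    have h2 : (‖z‖ : ℂ) ^ 2 = conj (fderiv ℂ f z z) / ((‖g z‖ ^ 2 : ℝ) : ℂ) * fderiv ℂ f z z := by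
      rw [← h1, hsq]; push_cast; rfl
    have := (hM z hz).2 fun w => by
      rw [h1, h2]
      ring
    simp only [hA]
    rw [hgi]
    positivity
  set S : E → ℝ := fun z => √(A z ^ 2 + B z ^ 2) with hS
  have hS2 : ∀ z, S z ^ 2 = A z ^ 2 + B z ^ 2 := fun z => Real.sq_sqrt (by positivity)
  have hSA : ∀ z ∈ Ω, 0 < S z + A z ∧ 0 < A z ^ 2 + B z ^ 2 := by
    intro z hz
    have hS0 : 0 ≤ S z := Real.sqrt_nonneg _
    rcases (hB0 z).eq_or_lt with h | h
    · have := hAB z hz h.symm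
      exact ⟨by positivity, by positivity⟩
    · refine ⟨?_, by positivity⟩
      have : |A z| < S z := by
        apply abs_lt_of_sq_lt_sq _ hS0
        rw [hS2]; nlinarith
      linarith [neg_abs_le (A z)]
  set v : E → E := fun z => (f z / ((‖g z‖ ^ 2 : ℝ) : ℂ)) • g z + (B z / (S z + A z)) • zt z with hv
  refine ⟨v, fun z hz => ?_, fun z hz => ?_⟩
  · have hfR : ContDiffAt ℝ 1 f z := (hf z hz).restrictScalars.contDiffAt
    have hgR : ContDiffAt ℝ 1 g z :=
      ((rieszR E).contDiff.contDiffAt).comp z ((hf z hz).fderiv.restrictScalars (𝕜 := ℝ)).contDiffAt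
    have hN : ContDiffAt ℝ 1 (fun z => ‖g z‖ ^ 2) z := hgR.norm_sq ℂ
    have hN0 : ‖g z‖ ^ 2 ≠ 0 := pow_ne_zero _ (norm_ne_zero_iff.2 (hg0 z hz))
    have hNc : ContDiffAt ℝ 1 (fun z => ((‖g z‖ ^ 2 : ℝ) : ℂ)⁻¹) z := by
      have := Complex.ofRealCLM.contDiff.contDiffAt.comp z (hN.inv hN0)
      refine this.congr_of_eventuallyEq (Eventually.of_forall fun y => ?_)
      simp
    have hI : ContDiffAt ℝ 1 (fun z => (inner ℂ (g z) z : ℂ)) z :=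
      ContDiffAt.inner ℂ (g := fun z : E => z) hgR contDiffAt_id
    have hztR : ContDiffAt ℝ 1 zt z := by
      simp only [hzt, div_eq_mul_inv]
      exact contDiffAt_id.sub ((hI.mul hNc).smul hgR)
    have hBR : ContDiffAt ℝ 1 B z := hztR.norm_sq ℂ
    have hAR : ContDiffAt ℝ 1 A z := by
      refine ContDiffAt.div (Complex.reCLM.contDiff.contDiffAt.comp z (ContDiffAt.mul ?_ hI)) hN hN0
      exact Complex.conjCLE.contDiff.contDiffAt.comp z hfR
    have hSR : ContDiffAt ℝ 1 S z := ((hAR.pow 2).add (hBR.pow 2)).sqrt (hSA z hz).2.ne'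
    have h3 : ContDiffAt ℝ 1 (fun z => f z / ((‖g z‖ ^ 2 : ℝ) : ℂ)) z := by
      simp only [div_eq_mul_inv]
      exact hfR.mul hNc
    exact (h3.smul hgR).add
      ((hBR.div (hSR.add hAR) (hSA z hz).1.ne').smul hztR)
  · have hN : 0 < ‖g z‖ := norm_pos_iff.2 (hg0 z hz)
    have hNc : ((‖g z‖ ^ 2 : ℝ) : ℂ) ≠ 0 := by exact_mod_cast (by positivity : ‖g z‖ ^ 2 ≠ 0)
    have hort : inner ℂ (g z) (zt z) = 0 := by
      simp only [hzt]
      rw [inner_sub_right, inner_smul_right, hsq, div_mul_cancel₀ _ hNc, sub_self]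
    have hcoe : v z = (f z / ((‖g z‖ ^ 2 : ℝ) : ℂ)) • g z +
        ((B z / (S z + A z) : ℝ) : ℂ) • zt z := by rw [Complex.coe_smul]
    constructor
    · rw [← hgi, hcoe, inner_add_right, inner_smul_right, inner_smul_right, hort, hsq,
        div_mul_cancel₀ _ hNc, mul_zero, add_zero]
    · have hzzt : inner ℂ z (zt z) = ((B z : ℝ) : ℂ) := by
        have h1 : z = zt z + (inner ℂ (g z) z / ((‖g z‖ ^ 2 : ℝ) : ℂ)) • g z := by simp [hzt]
        calc inner ℂ z (zt z) = inner ℂ (zt z + (inner ℂ (g z) z / ((‖g z‖ ^ 2 : ℝ) : ℂ)) • g z) (zt z) := by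
              rw [← h1]
          _ = _ := by rw [inner_add_left, inner_smul_left, hort, mul_zero, add_zero, hsq]
      have h1 : (inner ℂ z (v z)).re = A z + B z / (S z + A z) * B z := by
        rw [hcoe, inner_add_right, inner_smul_right, inner_smul_right, hzzt, Complex.add_re]
        congr 1
        · simp only [hA]
          rw [hgi', ← hgi, ← Complex.div_ofReal_re, ← Complex.conj_re]
          congr 1
          rw [map_mul, map_div₀, Complex.conj_conj, Complex.conj_ofReal]
          ring
        · rw [← Complex.ofReal_mul, Complex.ofReal_re]
      have hpos := (hSA z hz).1
      have hSpos : 0 < S z := Real.sqrt_pos.2 (hSA z hz).2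
      have h2 : A z + B z / (S z + A z) * B z = S z := by
        field_simp
        nlinarith [hS2 z]
      rw [h1, h2]
      exact hSpos

/-- Cutting off the field away from the compact set `K` by a bump function `χ` makes it globally
Lipschitz and bounded. -/
theorem exists_cutoff_field [FiniteDimensional ℂ E] {f : E → ℂ} {Ω K : Set E} (hΩ : IsOpen Ω)
    (hK : IsCompact K) (hKΩ : K ⊆ Ω) {v : E → E} (hv : ∀ z ∈ Ω, ContDiffAt ℝ 1 v z)
    (hv' : ∀ z ∈ Ω, fderiv ℂ f z (v z) = f z ∧ 0 < (inner ℂ z (v z)).re) :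
    ∃ (w : E → E) (χ : E → ℝ) (C : NNReal) (M : ℝ), LipschitzWith C w ∧ (∀ z, ‖w z‖ ≤ M) ∧
      (∀ z ∉ Ω, w z = 0) ∧ (∀ z, 0 ≤ χ z ∧ χ z ≤ 1) ∧ (∀ z ∈ K, χ z = 1) ∧
      ∀ z ∈ Ω, fderiv ℂ f z (w z) = χ z * f z ∧ 0 ≤ (inner ℂ z (w z)).re ∧
        (z ∈ K → 0 < (inner ℂ z (w z)).re) := by
  have : ProperSpace E := FiniteDimensional.proper ℂ E
  obtain ⟨O, hO, hKO, hOΩ, hOc⟩ := exists_open_between_and_isCompact_closure hK hΩ hKΩ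
  obtain ⟨χ, hχ, hχr, hχs, hχ1⟩ := exists_contMDiff_support_eq_eq_one_iff (n := 1)
    (modelWithCornersSelf ℝ E) hO hK.isClosed hKO
  have hχd : ContDiff ℝ 1 χ := hχ.contDiff
  have hχ01 : ∀ z, 0 ≤ χ z ∧ χ z ≤ 1 := fun z => hχr (mem_range_self z)
  have hts : tsupport χ = closure O := by rw [tsupport, hχs]
  have hwc : HasCompactSupport fun z => χ z • v z := by
    refine HasCompactSupport.smul_right (f := χ) (f' := v) ?_
    rw [HasCompactSupport, hts]
    exact hOc
  have hwd : ContDiff ℝ 1 fun z => χ z • v z := by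
    rw [contDiff_iff_contDiffAt]
    intro z
    by_cases hz : z ∈ Ω
    · exact hχd.contDiffAt.smul (hv z hz)
    · have h1 : z ∉ tsupport χ := by rw [hts]; exact fun h => hz (hOΩ h)
      have h2 : (fun z => χ z • v z) =ᶠ[𝓝 z] fun _ => 0 := by
        filter_upwards [notMem_tsupport_iff_eventuallyEq.1 h1] with y hy
        rw [hy]; simp
      exact contDiffAt_const.congr_of_eventuallyEq h2
  obtain ⟨C, hC⟩ := ContDiff.lipschitzWith_of_hasCompactSupport hwc hwd one_ne_zero
  obtain ⟨M, hM⟩ := hwc.exists_bound_of_continuous hwd.continuous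
  refine ⟨_, χ, C, M, hC, hM, fun z hz => ?_, hχ01, fun z hz => (hχ1 z).1 hz, fun z hz => ?_⟩
  · have h1 : χ z = 0 := by
      by_contra h
      have : z ∈ Function.support χ := h
      rw [hχs] at this
      exact hz (hOΩ (subset_closure this))
    simp [h1]
  · have h1 : inner ℂ z (χ z • v z) = (χ z : ℂ) * inner ℂ z (v z) := by
      rw [← Complex.coe_smul, inner_smul_right]
    have h2 : fderiv ℂ f z (χ z • v z) = χ z * fderiv ℂ f z (v z) := by
      rw [← Complex.coe_smul, map_smul, smul_eq_mul]
    rw [h1, h2, (hv' z hz).1, Complex.re_ofReal_mul]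
    refine ⟨rfl, mul_nonneg (hχ01 z).1 (hv' z hz).2.le, fun hzK => ?_⟩
    rw [(hχ1 z).1 hzK, one_mul]
    exact (hv' z hz).2

/-- A bounded globally Lipschitz field has a continuous flow on bounded sets for bounded times. -/
theorem exists_flow [CompleteSpace E] {w : E → E} {C : NNReal} {M : ℝ} (hw : LipschitzWith C w)
    (hM : ∀ z, ‖w z‖ ≤ M) (R T : ℝ) (hR : 0 ≤ R) (hT : 0 ≤ T) :
    ∃ α : E × ℝ → E, (∀ x ∈ Metric.closedBall (0 : E) R, α (x, 0) = x ∧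
      ∀ t ∈ Ioo (-T) T, HasDerivAt (fun t => α (x, t)) (w (α (x, t))) t) ∧
      ContinuousOn α (Metric.closedBall (0 : E) R ×ˢ Ioo (-T) T) := by
  have hM0 : 0 ≤ M := (norm_nonneg _).trans (hM 0)
  have hpl : IsPicardLindelof (fun _ => w) (tmin := -T) (tmax := T) ⟨0, by simp [hT]⟩ (0 : E)
      (⟨R + M * T, by positivity⟩ : NNReal) ⟨R, hR⟩ ⟨M, hM0⟩ C :=
    IsPicardLindelof.of_time_independent (fun x _ => hM x) hw.lipschitzOnWith (by
      change M * max (T - 0) (0 - -T) ≤ (R + M * T) - R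
      simp)
  obtain ⟨α, h1, h2⟩ := hpl.exists_forall_mem_closedBall_eq_hasDerivWithinAt_continuousOn
  refine ⟨α, fun x hx => ⟨(h1 x hx).1, fun t ht => ?_⟩, h2.mono
    (prod_mono le_rfl Ioo_subset_Icc_self)⟩
  exact ((h1 x hx).2 t (Ioo_subset_Icc_self ht)).hasDerivAt (Icc_mem_nhds ht.1 ht.2)

end Field

/-! ### Trajectories -/

section Flow
open ComplexConjugate
variable {E : Type*} [NormedAddCommGroup E] [InnerProductSpace ℂ E]

theorem traj_unique {w : E → E} {C : NNReal} (hw : LipschitzWith C w) {a b t₀ : ℝ}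
    (ht₀ : t₀ ∈ Ioo a b) {z z' : ℝ → E} (hz : ∀ t ∈ Ioo a b, HasDerivAt z (w (z t)) t)
    (hz' : ∀ t ∈ Ioo a b, HasDerivAt z' (w (z' t)) t) (h : z t₀ = z' t₀) :
    ∀ t ∈ Ioo a b, z t = z' t :=
  ODE_solution_unique_of_mem_Ioo (v := fun _ => w) (s := fun _ => univ) (K := C)
    (fun _ _ => hw.lipschitzOnWith) ht₀ (fun t ht => ⟨hz t ht, mem_univ _⟩)
    (fun t ht => ⟨hz' t ht, mem_univ _⟩) h

/-- A trajectory of the cut-off field that meets `Ω` never leaves it; along it both `‖z‖` and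
`‖f z‖` increase, the latter at most exponentially, and inside `K` the growth of `f` is exactly
exponential with constant argument while `‖z‖` is strictly increasing. -/
theorem traj_facts {f : E → ℂ} {Ω K : Set E} (hfd : ∀ z ∈ Ω, DifferentiableAt ℂ f z)
    {w : E → E} {χ : E → ℝ} {C : NNReal} (hw : LipschitzWith C w)
    (hw0 : ∀ z ∉ Ω, w z = 0) (hχ : ∀ z, 0 ≤ χ z ∧ χ z ≤ 1) (hχ1 : ∀ z ∈ K, χ z = 1)
    (hwf : ∀ z ∈ Ω, fderiv ℂ f z (w z) = χ z * f z ∧ 0 ≤ (inner ℂ z (w z)).re ∧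
      (z ∈ K → 0 < (inner ℂ z (w z)).re))
    {a b t₀ : ℝ} (ht₀ : t₀ ∈ Ioo a b) {z : ℝ → E}
    (hz : ∀ t ∈ Ioo a b, HasDerivAt z (w (z t)) t) (hzt : z t₀ ∈ Ω) :
    MonotoneOn (fun t => ‖z t‖) (Ioo a b) ∧ MonotoneOn (fun t => ‖f (z t)‖) (Ioo a b) ∧
      (∀ t ∈ Ioo a b, ∀ s ∈ Ioo a b, t ≤ s → ‖f (z s)‖ ≤ Real.exp (s - t) * ‖f (z t)‖) ∧
      ∀ t ∈ Ioo a b, ∀ s ∈ Ioo a b, t ≤ s → (∀ u ∈ Icc t s, z u ∈ K) →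
        f (z s) = Real.exp (s - t) * f (z t) ∧ (t < s → ‖z t‖ < ‖z s‖) := by
  have hΩ : ∀ t ∈ Ioo a b, z t ∈ Ω := by
    intro t ht
    by_contra hcon
    -- a point outside `Ω` is stationary, so the trajectory would be constant
    have := traj_unique hw ht hz (z' := fun _ => z t)
      (fun s _ => by simpa [hw0 _ hcon] using hasDerivAt_const s (z t)) rfl t₀ ht₀
    exact hcon (this ▸ hzt)
  have hn : ∀ t ∈ Ioo a b,
      HasDerivAt (fun t => ‖z t‖ ^ 2) (2 * (inner ℂ (z t) (w (z t))).re) t := by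
    intro t ht
    let _ : InnerProductSpace ℝ E := InnerProductSpace.rclikeToReal ℂ E
    exact (hz t ht).norm_sq
  have hF : ∀ t ∈ Ioo a b, HasDerivAt (fun t => f (z t)) (χ (z t) * f (z t)) t := by
    intro t ht
    have h1 := ((hfd _ (hΩ t ht)).hasFDerivAt.restrictScalars ℝ).comp_hasDerivAt t (hz t ht)
    rw [← (hwf _ (hΩ t ht)).1]
    exact h1
  have hFn : ∀ t ∈ Ioo a b,
      HasDerivAt (fun t => ‖f (z t)‖ ^ 2) (2 * (χ (z t) * ‖f (z t)‖ ^ 2)) t := by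
    intro t ht
    have h1 := (hF t ht).norm_sq
    have h2 : inner ℝ (f (z t)) (χ (z t) * f (z t)) = χ (z t) * ‖f (z t)‖ ^ 2 := by
      rw [← Complex.real_smul, inner_smul_right, real_inner_self_eq_norm_sq]
    rwa [h2] at h1
  have hFe : ∀ t ∈ Ioo a b, HasDerivAt (fun t => Real.exp (-2 * t) * ‖f (z t)‖ ^ 2)
      (Real.exp (-2 * t) * ((2 * (χ (z t) - 1)) * ‖f (z t)‖ ^ 2)) t := by
    intro t ht
    have h1 := ((hasDerivAt_id t).const_mul (-2)).exp.mul (hFn t ht)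
    refine h1.congr_deriv ?_
    simp only [id]
    ring
  have hIoo : interior (Ioo a b) = Ioo a b := interior_Ioo
  have m1 : MonotoneOn (fun t => ‖z t‖ ^ 2) (Ioo a b) := by
    refine monotoneOn_of_hasDerivWithinAt_nonneg (convex_Ioo a b)
      (fun t ht => (hn t ht).continuousAt.continuousWithinAt)
      (fun t ht => (hn t (hIoo ▸ ht)).hasDerivWithinAt) fun t ht => ?_
    have := (hwf _ (hΩ t (hIoo ▸ ht))).2.1
    linarith
  have m2 : MonotoneOn (fun t => ‖f (z t)‖ ^ 2) (Ioo a b) := by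
    refine monotoneOn_of_hasDerivWithinAt_nonneg (convex_Ioo a b)
      (fun t ht => (hFn t ht).continuousAt.continuousWithinAt)
      (fun t ht => (hFn t (hIoo ▸ ht)).hasDerivWithinAt) fun t ht => ?_
    have := (hχ (z t)).1
    positivity
  have m3 : AntitoneOn (fun t => Real.exp (-2 * t) * ‖f (z t)‖ ^ 2) (Ioo a b) := by
    refine antitoneOn_of_hasDerivWithinAt_nonpos (convex_Ioo a b)
      (fun t ht => (hFe t ht).continuousAt.continuousWithinAt)
      (fun t ht => (hFe t (hIoo ▸ ht)).hasDerivWithinAt) fun t ht => ?_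
    have := (hχ (z t)).2
    exact mul_nonpos_of_nonneg_of_nonpos (Real.exp_pos _).le
      (mul_nonpos_of_nonpos_of_nonneg (by linarith) (by positivity))
  refine ⟨fun t ht s hs hts => ?_, fun t ht s hs hts => ?_, fun t ht s hs hts => ?_,
    fun t ht s hs hts hK => ⟨?_, fun hlt => ?_⟩⟩
  · exact (sq_le_sq₀ (norm_nonneg _) (norm_nonneg _)).1 (m1 ht hs hts)
  · exact (sq_le_sq₀ (norm_nonneg _) (norm_nonneg _)).1 (m2 ht hs hts)
  · have h1 := m3 ht hs hts
    refine (sq_le_sq₀ (norm_nonneg _) (by positivity)).1 ?_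
    have h2 : Real.exp (2 * s) * (Real.exp (-2 * s) * ‖f (z s)‖ ^ 2) ≤
      Real.exp (2 * s) * (Real.exp (-2 * t) * ‖f (z t)‖ ^ 2) :=
      mul_le_mul_of_nonneg_left h1 (Real.exp_pos _).le
    rw [← mul_assoc, ← mul_assoc, ← Real.exp_add, ← Real.exp_add] at h2
    rw [mul_pow, ← Real.exp_nat_mul]
    rw [show 2 * s + -2 * s = 0 by ring, Real.exp_zero, one_mul] at h2
    rwa [show ((2 : ℕ) : ℝ) * (s - t) = 2 * s + -2 * t by push_cast; ring]
  · have hsub : Icc t s ⊆ Ioo a b := fun u hu => ⟨ht.1.trans_le hu.1, hu.2.trans_lt hs.2⟩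
    have hG : ∀ u ∈ Icc t s, HasDerivAt (fun u : ℝ => Complex.exp (-(u : ℂ)) * f (z u)) 0 u := by
      intro u hu
      have h1 : HasDerivAt (fun u : ℝ => Complex.exp (-(u : ℂ))) (Complex.exp (-(u : ℂ)) * (-1)) u :=
        ((hasDerivAt_id u).ofReal_comp.neg).cexp
      have h2 := h1.mul (hF u (hsub hu))
      refine h2.congr_deriv ?_
      rw [hχ1 _ (hK u hu)]
      push_cast
      ring
    have h3 := constant_of_has_deriv_right_zero
      (fun u hu => (hG u hu).continuousAt.continuousWithinAt)
      (fun u hu => (hG u (Ico_subset_Icc_self hu)).hasDerivWithinAt) s ⟨hts, le_rfl⟩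
    have h4 := congrArg (fun c => Complex.exp s * c) h3
    simp only [← mul_assoc, ← Complex.exp_add] at h4
    rw [add_neg_cancel, Complex.exp_zero, one_mul] at h4
    rw [h4, Complex.ofReal_exp]
    push_cast
    rw [sub_eq_add_neg]
  · have hsub : Icc t s ⊆ Ioo a b := fun u hu => ⟨ht.1.trans_le hu.1, hu.2.trans_lt hs.2⟩
    have m4 : StrictMonoOn (fun t => ‖z t‖ ^ 2) (Icc t s) := by
      refine strictMonoOn_of_hasDerivWithinAt_pos (convex_Icc t s)
        (fun u hu => (hn u (hsub hu)).continuousAt.continuousWithinAt)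
        (fun u hu => (hn u (hsub (interior_subset hu))).hasDerivWithinAt) fun u hu => ?_
      have := (hwf _ (hΩ u (hsub (interior_subset hu)))).2.2 (hK u (interior_subset hu))
      linarith
    exact (sq_lt_sq₀ (norm_nonneg _) (norm_nonneg _)).1
      (m4 ⟨le_rfl, hts⟩ ⟨hts, le_rfl⟩ hlt)

end Flow

/-! ### Tube and sphere -/

section Tube
open ComplexConjugate
variable {E : Type*} [NormedAddCommGroup E] [InnerProductSpace ℂ E]

/-- The equivalence of the tube and the sphere, once a field `v` with `df(v) = f` and
`Re ⟪z, v⟫ > 0` is available. The map from the sphere to the tube flows `y` backwards for the time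
`log (‖f y‖ / η)`; it is a continuous bijection between compact sets. -/
theorem tube_homeo [FiniteDimensional ℂ E] {f : E → ℂ} {Ω : Set E} (hΩ : IsOpen Ω)
    (hfd : ∀ z ∈ Ω, DifferentiableAt ℂ f z) {v : E → E} (hv : ∀ z ∈ Ω, ContDiffAt ℝ 1 v z)
    (hv' : ∀ z ∈ Ω, fderiv ℂ f z (v z) = f z ∧ 0 < (inner ℂ z (v z)).re) {ε η : ℝ}
    (hε : 0 < ε) (hη : 0 < η) (hfc : ContinuousOn f (Metric.closedBall 0 ε))
    (hεΩ : ∀ z ∈ Metric.closedBall (0 : E) ε, f z ≠ 0 → z ∈ Ω) :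
    ∃ h : ({x ∈ Metric.closedBall (0 : E) ε | ‖f x‖ = η} : Set _) ≃ₜ
              ({x ∈ Metric.sphere (0 : E) ε | η ≤ ‖f x‖} : Set _),
          ∀ x, f (h x).1 / ‖f (h x).1‖ = f x.1 / ‖f x.1‖ := by
  have : ProperSpace E := FiniteDimensional.proper ℂ E
  have : CompleteSpace E := FiniteDimensional.complete ℂ E
  set B := Metric.closedBall (0 : E) ε with hBdef
  set K : Set E := B ∩ (fun z => ‖f z‖) ⁻¹' Ici η with hKdef
  have hBc : IsCompact B := isCompact_closedBall _ _
  have hK : IsCompact K :=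
    hBc.of_isClosed_subset (hfc.norm.preimage_isClosed_of_isClosed hBc.isClosed isClosed_Ici)
      inter_subset_left
  have hKΩ : K ⊆ Ω := fun z hz => hεΩ z hz.1 (norm_pos_iff.1 (hη.trans_le hz.2))
  obtain ⟨w, χ, C, M, hw, hM, hw0, hχ, hχ1, hwf⟩ := exists_cutoff_field hΩ hK hKΩ hv hv'
  obtain ⟨Mf, hMf⟩ := hBc.exists_bound_of_continuousOn hfc
  -- no point of the ball has `‖f‖` as large as `exp T * η`
  obtain ⟨T, hT0, hT⟩ : ∃ T : ℝ, 0 < T ∧ Mf < Real.exp T * η := by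
    have h1 : Tendsto (fun T : ℝ => Real.exp T * η) atTop atTop :=
      Real.tendsto_exp_atTop.atTop_mul_const hη
    exact ((eventually_gt_atTop 0).and (h1.eventually_gt_atTop Mf)).exists
  obtain ⟨α, hα, hαc⟩ := exists_flow hw hM ε (2 * T) hε.le (by positivity)
  have hKB : K ⊆ B := inter_subset_left
  have facts := fun (a b t₀ : ℝ) (ht₀ : t₀ ∈ Ioo a b) (z : ℝ → E)
      (hz : ∀ t ∈ Ioo a b, HasDerivAt z (w (z t)) t) (hzt : z t₀ ∈ K) =>
    traj_facts hfd hw hw0 hχ hχ1 hwf ht₀ hz (hKΩ hzt)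
  have between : ∀ {a b t s : ℝ} (_ : t ∈ Ioo a b) (_ : s ∈ Ioo a b) (_ : t ≤ s) {z : ℝ → E}
      (_ : ∀ t ∈ Ioo a b, HasDerivAt z (w (z t)) t) (_ : z t ∈ K) (_ : ‖z s‖ ≤ ε),
      z s ∈ K ∧ f (z s) = Real.exp (s - t) * f (z t) ∧ (t < s → ‖z t‖ < ‖z s‖) := by
    intro a b t s ht hs hts z hz hzt hzs
    obtain ⟨m1, m2, -, m4⟩ := facts _ _ _ ht _ hz hzt
    have hall : ∀ u ∈ Icc t s, z u ∈ K := fun u hu => by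
      have huI : u ∈ Ioo a b := ⟨ht.1.trans_le hu.1, hu.2.trans_lt hs.2⟩
      exact ⟨mem_closedBall_zero_iff.2 ((m1 huI hs hu.2).trans hzs), hzt.2.trans (m2 ht huI hu.1)⟩
    exact ⟨hall s ⟨hts, le_rfl⟩, m4 t ht s hs hts hall⟩
  -- `a y` is the time in which the flow multiplies `η` to `‖f y‖`
  set a : E → ℝ := fun y => Real.log (‖f y‖ / η) with ha
  have hexp : ∀ y ∈ K, Real.exp (a y) * η = ‖f y‖ := fun y hy => by
    have h0 : 0 < ‖f y‖ := hη.trans_le hy.2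
    rw [ha]
    simp only
    rw [Real.exp_log (by positivity)]
    field_simp
  have ha0 : ∀ y ∈ K, 0 ≤ a y := fun y hy => Real.log_nonneg ((one_le_div hη).2 hy.2)
  have haT : ∀ y ∈ K, a y < T := fun y hy => by
    have h1 := (hMf y hy.1).trans_lt hT
    rw [← hexp y hy] at h1
    exact Real.exp_lt_exp.1 (lt_of_mul_lt_mul_right h1 hη.le)
  set D : Set E := {x ∈ Metric.sphere (0 : E) ε | η ≤ ‖f x‖} with hD
  set N : Set E := {x ∈ B | ‖f x‖ = η} with hN
  have hDK : D ⊆ K := fun y hy => ⟨Metric.sphere_subset_closedBall hy.1, hy.2⟩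
  have hNK : N ⊆ K := fun y hy => ⟨hy.1, hy.2.ge⟩
  have hDc : IsCompact D := by
    have : D = Metric.sphere (0 : E) ε ∩ K := by
      ext y
      exact ⟨fun hy => ⟨hy.1, hDK hy⟩, fun hy => ⟨hy.1, hy.2.2⟩⟩
    rw [this]
    exact (isCompact_sphere _ _).inter hK
  -- the trajectory through `y` with time shifted so that `y` is reached at time `c`
  have htraj : ∀ y ∈ B, ∀ c ∈ Ico 0 T, ∀ t ∈ Ioo (-T) (2 * T),
      HasDerivAt (fun t => α (y, t - c)) (w (α (y, t - c))) t := by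
    intro y hy c hc t ht
    have h1 := (hα y hy).2 (t - c) ⟨by linarith [hc.2, ht.1], by linarith [hc.1, ht.2]⟩
    exact h1.comp_sub_const t c
  have hα0 : ∀ y ∈ B, α (y, 0) = y := fun y hy => (hα y hy).1
  have hI0 : (0 : ℝ) ∈ Ioo (-T) (2 * T) := ⟨by linarith, by linarith⟩
  have hI : ∀ c ∈ Ico 0 T, c ∈ Ioo (-T) (2 * T) := fun c hc =>
    ⟨by linarith [hc.1], by linarith [hc.2]⟩
  have hac : ∀ y ∈ K, a y ∈ Ico 0 T := fun y hy => ⟨ha0 y hy, haT y hy⟩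
  set k : E → E := fun y => α (y, -a y) with hk
  have hkK : ∀ y ∈ K, k y ∈ K ∧ f y = Real.exp (a y) * f (k y) := by
    intro y hy
    have htr := htraj y hy.1 _ (hac y hy)
    have hy1 : α (y, a y - a y) = y := by rw [sub_self, hα0 y hy.1]
    have hk1 : α (y, 0 - a y) = k y := by rw [zero_sub]
    obtain ⟨m1, -, m3, -⟩ := facts _ _ _ (hI _ (hac y hy)) _ htr (by simpa only [hy1] using hy)
    have h1 := m1 hI0 (hI _ (hac y hy)) (ha0 y hy)
    have h3 := m3 0 hI0 _ (hI _ (hac y hy)) (ha0 y hy)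
    simp only [hy1, hk1] at h1 h3
    have hyB : ‖y‖ ≤ ε := mem_closedBall_zero_iff.1 hy.1
    have hkK : k y ∈ K := by
      refine ⟨mem_closedBall_zero_iff.2 (h1.trans hyB), ?_⟩
      rw [← hexp y hy, sub_zero] at h3
      exact le_of_mul_le_mul_left h3 (Real.exp_pos _)
    have h4 := (between hI0 (hI _ (hac y hy)) (ha0 y hy) htr (by simpa only [hk1] using hkK)
      (by simpa only [hy1] using hyB)).2.1
    simp only [hy1, hk1, sub_zero] at h4
    exact ⟨hkK, h4⟩
  have hkN : ∀ y ∈ D, k y ∈ N := by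
    intro y hy
    obtain ⟨h1, h2⟩ := hkK y (hDK hy)
    refine ⟨h1.1, ?_⟩
    have h3 := congrArg norm h2
    rw [norm_mul, Complex.norm_real, Real.norm_of_nonneg (Real.exp_pos _).le,
      ← hexp y (hDK hy)] at h3
    exact (mul_left_cancel₀ (Real.exp_pos _).ne' h3).symm
  have hkc : ContinuousOn k D := by
    have hfD : ContinuousOn (fun y => ‖f y‖) D := (hfc.mono fun y hy => hKB (hDK hy)).norm
    have haD : ContinuousOn a D := ContinuousOn.log (hfD.div_const η) fun y hy =>
      (div_pos (hη.trans_le hy.2) hη).ne'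
    refine hαc.comp (continuousOn_id.prodMk haD.neg) fun y hy => ⟨hKB (hDK hy), ?_⟩
    have := hac y (hDK hy)
    exact ⟨by simp only; linarith [this.2], by simp only; linarith [this.1]⟩
  have hinj' : ∀ y₁ ∈ D, ∀ y₂ ∈ D, k y₁ = k y₂ → a y₁ ≤ a y₂ → y₁ = y₂ := by
    intro y₁ h₁ y₂ h₂ hkk hle
    have c₁ := hac y₁ (hDK h₁)
    have c₂ := hac y₂ (hDK h₂)
    have t₁ := htraj y₁ (hKB (hDK h₁)) _ c₁
    have t₂ := htraj y₂ (hKB (hDK h₂)) _ c₂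
    have heq := traj_unique hw hI0 t₁ t₂ (by simpa only [zero_sub] using hkk) _ (hI _ c₁)
    have e₁ : α (y₁, a y₁ - a y₁) = y₁ := by rw [sub_self, hα0 y₁ (hKB (hDK h₁))]
    have e₂ : α (y₂, a y₂ - a y₂) = y₂ := by rw [sub_self, hα0 y₂ (hKB (hDK h₂))]
    rw [e₁] at heq
    have n₁ : ‖y₁‖ = ε := mem_sphere_zero_iff_norm.1 h₁.1
    have n₂ : ‖y₂‖ = ε := mem_sphere_zero_iff_norm.1 h₂.1
    have hst := (between (hI _ c₁) (hI _ c₂) hle t₂ (by simpa only [← heq] using hDK h₁)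
      (by simp only [e₂]; exact n₂.le)).2.2
    simp only [← heq, e₂, n₁, n₂, lt_irrefl, imp_false, not_lt] at hst
    have haa : a y₁ = a y₂ := le_antisymm hle hst
    rw [heq, haa, e₂]
  have hinj : ∀ y₁ ∈ D, ∀ y₂ ∈ D, k y₁ = k y₂ → y₁ = y₂ := by
    intro y₁ h₁ y₂ h₂ hkk
    rcases le_total (a y₁) (a y₂) with h | h
    · exact hinj' y₁ h₁ y₂ h₂ hkk h
    · exact (hinj' y₂ h₂ y₁ h₁ hkk.symm h).symm
  have hsurj : ∀ x ∈ N, ∃ y ∈ D, k y = x := by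
    intro x hx
    have hxB : x ∈ B := hx.1
    have tx := htraj x hxB 0 ⟨le_rfl, hT0⟩
    simp only [sub_zero] at tx
    have hxK : α (x, 0) ∈ K := by rw [hα0 x hxB]; exact hNK hx
    have hTI : T ∈ Ioo (-T) (2 * T) := ⟨by linarith, by linarith⟩
    have hge : ε ≤ ‖α (x, T)‖ := by
      by_contra hlt
      obtain ⟨h1, h2, -⟩ := between hI0 hTI hT0.le tx hxK (not_le.1 hlt).le
      have h3 := hMf _ h1.1
      rw [h2, hα0 x hxB, norm_mul, Complex.norm_real, Real.norm_of_nonneg (Real.exp_pos _).le,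
        hx.2, sub_zero] at h3
      linarith
    have hcont : ContinuousOn (fun t => ‖α (x, t)‖) (Icc 0 T) := fun t ht =>
      (tx t ⟨by linarith [ht.1], by linarith [ht.2]⟩).continuousAt.norm.continuousWithinAt
    obtain ⟨t₁, ht₁, hnorm⟩ := intermediate_value_Icc hT0.le hcont
      (show ε ∈ Icc ‖α (x, 0)‖ ‖α (x, T)‖ from
        ⟨by rw [hα0 x hxB]; exact mem_closedBall_zero_iff.1 hxB, hge⟩)
    have ht₁I : t₁ ∈ Ioo (-T) (2 * T) := ⟨by linarith [ht₁.1], by linarith [ht₁.2]⟩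
    obtain ⟨h1, h2, -⟩ := between hI0 ht₁I ht₁.1 tx hxK hnorm.le
    set y := α (x, t₁) with hy
    have hat : a y = t₁ := by
      have h3 := hexp y h1
      rw [h2, hα0 x hxB, norm_mul, Complex.norm_real, Real.norm_of_nonneg (Real.exp_pos _).le,
        hx.2, sub_zero] at h3
      exact Real.exp_injective (mul_right_cancel₀ hη.ne' h3)
    refine ⟨y, ⟨mem_sphere_zero_iff_norm.2 hnorm, h1.2⟩, ?_⟩
    have ty := htraj y h1.1 _ (hac y h1)
    have := traj_unique hw ht₁I ty tx (by simp only [hat, sub_self, hα0 y h1.1]; rfl) 0 hI0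
    simp only [zero_sub] at this
    rw [hα0 x hxB] at this
    exact this
  have : CompactSpace D := isCompact_iff_compactSpace.1 hDc
  let k' : D → N := fun y => ⟨k y.1, hkN y.1 y.2⟩
  have hk'c : Continuous k' := (continuousOn_iff_continuous_domRestrict.1 hkc).subtype_mk _
  have hk'b : Function.Bijective k' :=
    ⟨fun y₁ y₂ h => Subtype.ext (hinj _ y₁.2 _ y₂.2 (congrArg Subtype.val h)), fun x => by
      obtain ⟨y, hy, hyx⟩ := hsurj x.1 x.2
      exact ⟨⟨y, hy⟩, Subtype.ext hyx⟩⟩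
  let e : D ≃ₜ N := Continuous.homeoOfEquivCompactToT2 (f := Equiv.ofBijective k' hk'b) hk'c
  refine ⟨e.symm, fun x => ?_⟩
  obtain ⟨y, rfl⟩ := e.surjective x
  rw [e.symm_apply_apply]
  have h1 : (e y).1 = k y.1 := rfl
  have h2 := (hkK y.1 (hDK y.2)).2
  rw [h1, h2, norm_mul, Complex.norm_real, Real.norm_of_nonneg (Real.exp_pos _).le,
    Complex.ofReal_mul]
  exact mul_div_mul_left _ _ (Complex.ofReal_ne_zero.2 (Real.exp_pos _).ne')

end Tube

theorem stmt_5 (n : ℕ) (hn : 1 ≤ n)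
    (U : Set (EuclideanSpace ℂ (Fin n))) (hU : IsOpen U)
    (h0U : (0 : EuclideanSpace ℂ (Fin n)) ∈ U)
    (f : EuclideanSpace ℂ (Fin n) → ℂ) (hf : DifferentiableOn ℂ f U) (hf0 : f 0 = 0)
    (hfnz : ∀ W ∈ nhds (0 : EuclideanSpace ℂ (Fin n)), ∃ x ∈ W ∩ U, f x ≠ 0) :
    ∃ ε₀ > (0 : ℝ), Metric.closedBall (0 : EuclideanSpace ℂ (Fin n)) ε₀ ⊆ U ∧
      ∀ ε : ℝ, 0 < ε → ε ≤ ε₀ →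
      ∃ η₀ > (0 : ℝ), ∀ η : ℝ, 0 < η → η ≤ η₀ →
        ∃ h : ({x ∈ Metric.closedBall (0 : EuclideanSpace ℂ (Fin n)) ε | ‖f x‖ = η} : Set _) ≃ₜ
              ({x ∈ Metric.sphere (0 : EuclideanSpace ℂ (Fin n)) ε | η ≤ ‖f x‖} : Set _),
          ∀ x, f ((h x).1 : EuclideanSpace ℂ (Fin n)) / ‖f ((h x).1 : EuclideanSpace ℂ (Fin n))‖
              = f (x.1 : EuclideanSpace ℂ (Fin n)) / ‖f (x.1 : EuclideanSpace ℂ (Fin n))‖ := by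
  have hfa : AnalyticOnNhd ℂ f U := osgood hU hf
  obtain ⟨ε₁, hε₁, hM⟩ := milnor_lemma (hfa 0 h0U) hf0
  obtain ⟨ε₂, hε₂, hB⟩ := Metric.isOpen_iff.1 hU 0 h0U
  set r := min ε₁ ε₂ with hr
  have hr0 : 0 < r := lt_min hε₁ hε₂
  have hrU : Metric.ball 0 r ⊆ U := (Metric.ball_subset_ball (min_le_right _ _)).trans hB
  have hcb : ∀ ε ≤ r / 2, Metric.closedBall (0 : EuclideanSpace ℂ (Fin n)) ε ⊆ Metric.ball 0 r :=
    fun ε hε => Metric.closedBall_subset_ball (by linarith)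
  set Ω := Metric.ball (0 : EuclideanSpace ℂ (Fin n)) r ∩ f ⁻¹' {0}ᶜ with hΩ
  have hΩo : IsOpen Ω :=
    (hfa.continuousOn.mono hrU).isOpen_inter_preimage Metric.isOpen_ball isOpen_compl_singleton
  have hΩU : Ω ⊆ U := inter_subset_left.trans hrU
  obtain ⟨v, hv, hv'⟩ := exists_field (hfa.mono hΩU) fun z hz =>
    ⟨hz.2, hM z (Metric.ball_subset_ball (min_le_left _ _) hz.1) hz.2⟩
  refine ⟨r / 2, by positivity, (hcb _ le_rfl).trans hrU, fun ε hε hεr =>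
    ⟨1, one_pos, fun η hη _ => ?_⟩⟩
  exact tube_homeo hΩo (fun z hz => (hfa z (hΩU hz)).differentiableAt) hv hv' hε hη
    (hfa.continuousOn.mono ((hcb ε hεr).trans hrU)) fun z hz hz0 => ⟨hcb ε hεr hz, hz0⟩
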